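/- For every fixed integer d ≥ 1, as the integer b → ∞ (with b > d), I(b,d,0) = b·log b − b·log(1 + 1/d) + a₁/b + a₂/b² + a₃/b³ + a₄/b⁴ + a₅/b⁵ + O(b⁻⁶), where: a₁ = (d + 1/2)(ζ(2) − d⁻²); a₂ = −(d² + d + 1/3)ζ(3) + (9d² + 8d + 2)/(6d³(d+1)); a₃ = (d + 1/2)(d² + d + 1/2)ζ(4) − (d + 1/2)ζ(2) − (d + 1/2)(2d⁴ + 6d³ + 6d² + 4d + 1)/(2d⁴(d+1)²); a₄ = −(d⁴ + 2d³ + 2d² + d + 1/5)ζ(5) + (2d+1)d·ζ(3) − (d + 1/2)ζ(2) + (60d⁷ + 240d⁶ + 500d⁵ + 705d⁴ + 627d³ + 331d² + 96d + 12)/(60d⁵(d+1)³); a₅ = (d + 1/2)(d² + d + 1)(d² + d + 1/3)ζ(6) − 3(d + 1/2)d²ζ(4) + (3d² + 3d + 5/6)ζ(3) − (d + 1/2)(9d⁶ + 38d⁵ + 56d⁴ + 44d³ + 22d² + 7d + 1)/(3d⁶(d+1)³). -/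

import Mathlib

open Filter Asymptotics

/-- The Irwin harmonic sum `I(b,d,k)`: sum of `1/m` over positive integers `m`
whose base-`b` digit list contains the digit `d` exactly `k` times. -/
noncomputable def irwinSum (b d k : ℕ) : ℝ :=
  ∑' m : ℕ, if 0 < m ∧ (Nat.digits b m).count d = k then (1 : ℝ) / m else 0

/-- `ζ(s) = ∑_{n ≥ 1} n^{-s}` for an integer exponent. -/
noncomputable def zetaR (s : ℕ) : ℝ := ∑' n : ℕ, 1 / ((n : ℝ) + 1) ^ s

/-- admissibility weight of an integer: `1` if it has no digit `d`, else `0`. -/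
noncomputable def wOk (b d m : ℕ) : ℝ := if (Nat.digits b m).count d = 0 then 1 else 0

/-- weight of a single digit. -/
noncomputable def vOk (d a : ℕ) : ℝ := if a = d then 0 else 1

/-- level `l` part of the Burnol measure. -/
noncomputable def muL (b d l : ℕ) (f : ℝ → ℝ) : ℝ :=
  (∑ k ∈ Finset.range (b ^ l), wOk b d k * f ((k : ℝ) / (b : ℝ) ^ l)) / (b : ℝ) ^ l

/-- the Burnol measure as a functional. -/
noncomputable def mu (b d : ℕ) (f : ℝ → ℝ) : ℝ := ∑' l, muL b d l f

/-- the transfer operator. -/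
noncomputable def trf (b d : ℕ) (f : ℝ → ℝ) (x : ℝ) : ℝ :=
  (∑ a ∈ Finset.range b, vOk d a * f (((a : ℝ) + x) / b)) / b

/-- sum of `1/(n+x)` over admissible leading digits `n`. -/
noncomputable def leadF (b d : ℕ) (x : ℝ) : ℝ :=
  ∑ n ∈ Finset.Ico 1 b, vOk d n * (1 / ((n : ℝ) + x))

lemma sum_range_mul_aux (g : ℕ → ℝ) (n m : ℕ) :
    ∑ k ∈ Finset.range (n * m), g k
      = ∑ a ∈ Finset.range n, ∑ j ∈ Finset.range m, g (a * m + j) := by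
  induction n with
  | zero => simp
  | succ n ih => rw [Nat.succ_mul, Finset.sum_range_add, ih, Finset.sum_range_succ]

lemma count_step (b d m : ℕ) (hb : 2 ≤ b) (hd : 1 ≤ d) :
    (Nat.digits b m).count d = (Nat.digits b (m / b)).count d + if m % b = d then 1 else 0 := by
  rcases Nat.eq_zero_or_pos m with rfl | hm
  · have : (0 : ℕ) ≠ d := by omega
    simp [this]
  · rw [Nat.digits_def' (by omega) hm, List.count_cons]
    simp

lemma count_lead (b d l a k : ℕ) (hb : 2 ≤ b) (hd : 1 ≤ d) (ha : a < b) (hk : k < b ^ l) :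
    (Nat.digits b (a * b ^ l + k)).count d
      = (Nat.digits b k).count d + if a = d then 1 else 0 := by
  induction l generalizing k with
  | zero =>
    have hk0 : k = 0 := by simpa using hk
    subst hk0
    rw [count_step b d _ hb hd]
    simp [Nat.div_eq_of_lt ha, Nat.mod_eq_of_lt ha]
  | succ l ih =>
    have e1 : (a * b ^ (l + 1) + k) % b = k % b := by
      rw [pow_succ, ← mul_assoc, Nat.add_comm, Nat.add_mul_mod_self_right]
    have e2 : (a * b ^ (l + 1) + k) / b = a * b ^ l + k / b := by
      rw [pow_succ, ← mul_assoc, Nat.add_comm, Nat.add_mul_div_right _ _ (by omega), Nat.add_comm]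
    rw [count_step b d _ hb hd, e1, e2, ih (k / b), count_step b d k hb hd]
    · omega
    · rw [Nat.div_lt_iff_lt_mul (by omega), ← pow_succ]; exact hk

lemma wOk_lead (b d l a k : ℕ) (hb : 2 ≤ b) (hd : 1 ≤ d) (ha : a < b) (hk : k < b ^ l) :
    wOk b d (a * b ^ l + k) = vOk d a * wOk b d k := by
  unfold wOk vOk
  rw [count_lead b d l a k hb hd ha hk]
  by_cases h : a = d <;> simp [h]

lemma wOk_zero (b d : ℕ) : wOk b d 0 = 1 := by simp [wOk]
lemma wOk_nonneg (b d m : ℕ) : 0 ≤ wOk b d m := by unfold wOk; split_ifs <;> norm_num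
lemma vOk_nonneg (d m : ℕ) : 0 ≤ vOk d m := by unfold vOk; split_ifs <;> norm_num
lemma vOk_le_one (d m : ℕ) : vOk d m ≤ 1 := by unfold vOk; split_ifs <;> norm_num

lemma sum_vOk (b d : ℕ) (hdb : d < b) (g : ℕ → ℝ) :
    ∑ a ∈ Finset.range b, vOk d a * g a = ∑ a ∈ Finset.range b, g a - g d := by
  have : ∀ a ∈ Finset.range b, vOk d a * g a = g a - if a = d then g a else 0 := by
    intro a _
    unfold vOk
    split_ifs <;> ring
  rw [Finset.sum_congr rfl this, Finset.sum_sub_distrib, Finset.sum_ite_eq']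
  simp [hdb]

lemma sum_vOk_Ico (b d : ℕ) (hd : 1 ≤ d) (hdb : d < b) (g : ℕ → ℝ) :
    ∑ a ∈ Finset.Ico 1 b, vOk d a * g a = ∑ a ∈ Finset.Ico 1 b, g a - g d := by
  have : ∀ a ∈ Finset.Ico 1 b, vOk d a * g a = g a - if a = d then g a else 0 := by
    intro a _
    unfold vOk
    split_ifs <;> ring
  rw [Finset.sum_congr rfl this, Finset.sum_sub_distrib, Finset.sum_ite_eq']
  simp [hdb, hd]

lemma muL_zero (b d : ℕ) (f : ℝ → ℝ) : muL b d 0 f = f 0 := by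
  simp [muL, wOk_zero]

lemma muL_succ (b d l : ℕ) (hb : 2 ≤ b) (hd : 1 ≤ d) (f : ℝ → ℝ) :
    muL b d (l + 1) f = muL b d l (trf b d f) := by
  have hb0 : (b : ℝ) ≠ 0 := by positivity
  unfold muL trf
  rw [pow_succ' b l, sum_range_mul_aux]
  have h1 : ∀ a ∈ Finset.range b, ∀ k ∈ Finset.range (b ^ l),
      wOk b d (a * b ^ l + k) * f (((a * b ^ l + k : ℕ) : ℝ) / (b : ℝ) ^ (l + 1))
      = wOk b d k * (vOk d a * f (((a : ℝ) + (k : ℝ) / (b : ℝ) ^ l) / b)) := by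
    intro a ha k hk
    rw [wOk_lead b d l a k hb hd (Finset.mem_range.1 ha) (Finset.mem_range.1 hk)]
    have : (((a * b ^ l + k : ℕ) : ℝ) / (b : ℝ) ^ (l + 1)) = ((a : ℝ) + (k : ℝ) / (b : ℝ) ^ l) / b := by
      push_cast
      field_simp
      ring
    rw [this]; ring
  rw [Finset.sum_congr rfl (fun a ha => Finset.sum_congr rfl (h1 a ha)), Finset.sum_comm]
  rw [pow_succ, div_eq_div_iff (by positivity) (by positivity), Finset.sum_mul, Finset.sum_mul]
  refine Finset.sum_congr rfl fun k _ => ?_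
  rw [← Finset.mul_sum, mul_div_assoc', div_mul_eq_mul_div, eq_div_iff hb0]
  ring

lemma muL_one (b d l : ℕ) (hb : 2 ≤ b) (hd : 1 ≤ d) (hdb : d < b) :
    muL b d l (fun _ => 1) = (((b : ℝ) - 1) / b) ^ l := by
  have hlin : ∀ l (c : ℝ), muL b d l (fun _ => c) = c * muL b d l (fun _ => 1) := by
    intro l c
    unfold muL
    rw [← mul_div_assoc, Finset.mul_sum]
    congr 1
    refine Finset.sum_congr rfl fun k _ => ?_
    ring
  induction l with
  | zero => simp [muL_zero]
  | succ l ih =>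
    rw [muL_succ b d l hb hd]
    have : trf b d (fun _ => (1 : ℝ)) = fun _ => ((b : ℝ) - 1) / b := by
      funext x
      unfold trf
      rw [sum_vOk b d hdb (fun _ => (1 : ℝ))]
      simp
    rw [this, hlin, ih]
    ring

lemma node_mem (b l k : ℕ) (hb : 2 ≤ b) (hk : k ∈ Finset.range (b ^ l)) :
    (k : ℝ) / (b : ℝ) ^ l ∈ Set.Icc (0 : ℝ) 1 := by
  have h : k < b ^ l := Finset.mem_range.1 hk
  have h' : (k : ℝ) ≤ (b : ℝ) ^ l := by exact_mod_cast h.le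
  refine ⟨by positivity, ?_⟩
  have : (0 : ℝ) < (b : ℝ) ^ l := by positivity
  rw [div_le_one this]; exact h'

lemma muL_bound (b d l : ℕ) (hb : 2 ≤ b) (hd : 1 ≤ d) (hdb : d < b) (f : ℝ → ℝ) (C : ℝ)
    (hf : ∀ x ∈ Set.Icc (0 : ℝ) 1, |f x| ≤ C) :
    |muL b d l f| ≤ C * (((b : ℝ) - 1) / b) ^ l := by
  rw [← muL_one b d l hb hd hdb]
  unfold muL
  have hpos : (0 : ℝ) < (b : ℝ) ^ l := by positivity
  rw [abs_div, abs_of_pos hpos, ← mul_div_assoc]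
  gcongr
  rw [Finset.mul_sum]
  refine (Finset.abs_sum_le_sum_abs _ _).trans (Finset.sum_le_sum fun k hk => ?_)
  rw [abs_mul, abs_of_nonneg (wOk_nonneg b d k), mul_one, mul_comm]
  exact mul_le_mul_of_nonneg_right (hf _ (node_mem b l k hb hk)) (wOk_nonneg b d k)

lemma geom_hasSum (b : ℕ) (hb : 2 ≤ b) (C : ℝ) :
    HasSum (fun l : ℕ => C * (((b : ℝ) - 1) / b) ^ l) (C * b) := by
  have hb2 : (2 : ℝ) ≤ b := by exact_mod_cast hb
  have h0 : 0 ≤ ((b : ℝ) - 1) / b := div_nonneg (by linarith) (by linarith)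
  have h1 : ((b : ℝ) - 1) / b < 1 := by rw [div_lt_one (by linarith)]; linarith
  have := (hasSum_geometric_of_lt_one h0 h1).mul_left C
  have hb0 : (b : ℝ) ≠ 0 := by positivity
  have e : (1 - ((b : ℝ) - 1) / b)⁻¹ = b := by
    rw [sub_div, div_self hb0]; simp
  rw [e] at this
  exact this

/-- boundedness on `[0,1]`. -/
def BddI (f : ℝ → ℝ) : Prop := ∃ C : ℝ, ∀ x ∈ Set.Icc (0 : ℝ) 1, |f x| ≤ C

lemma muL_summable (b d : ℕ) (hb : 2 ≤ b) (hd : 1 ≤ d) (hdb : d < b) (f : ℝ → ℝ)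
    (hf : BddI f) : Summable (fun l => muL b d l f) := by
  obtain ⟨C, hC⟩ := hf
  exact Summable.of_norm_bounded (geom_hasSum b hb C).summable
    (fun l => by rw [Real.norm_eq_abs]; exact muL_bound b d l hb hd hdb f C hC)

lemma mu_bound (b d : ℕ) (hb : 2 ≤ b) (hd : 1 ≤ d) (hdb : d < b) (f : ℝ → ℝ) (C : ℝ)
    (hf : ∀ x ∈ Set.Icc (0 : ℝ) 1, |f x| ≤ C) : |mu b d f| ≤ C * b := by
  unfold mu
  exact tsum_of_norm_bounded (f := fun l => muL b d l f) (geom_hasSum b hb C)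
    (fun l => by rw [Real.norm_eq_abs]; exact muL_bound b d l hb hd hdb f C hf)

lemma mu_one (b d : ℕ) (hb : 2 ≤ b) (hd : 1 ≤ d) (hdb : d < b) :
    mu b d (fun _ => 1) = b := by
  have := (geom_hasSum b hb 1).tsum_eq
  unfold mu
  simp only [muL_one b d _ hb hd hdb]
  simpa using this

lemma mu_self (b d : ℕ) (hb : 2 ≤ b) (hd : 1 ≤ d) (hdb : d < b) (f : ℝ → ℝ) (hf : BddI f) :
    mu b d f = f 0 + mu b d (trf b d f) := by
  unfold mu
  rw [(muL_summable b d hb hd hdb f hf).tsum_eq_zero_add, muL_zero]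
  simp only [muL_succ b d _ hb hd]

lemma mu_approx {ι : Type} (b d : ℕ) (hb : 2 ≤ b) (hd : 1 ≤ d) (hdb : d < b) (s : Finset ι)
    (f : ℝ → ℝ) (g : ι → ℝ → ℝ) (c : ι → ℝ) (C : ℝ)
    (hf : BddI f) (hg : ∀ i ∈ s, BddI (g i))
    (h : ∀ x ∈ Set.Icc (0 : ℝ) 1, |f x - ∑ i ∈ s, c i * g i x| ≤ C) :
    |mu b d f - ∑ i ∈ s, c i * mu b d (g i)| ≤ C * b := by
  have e : mu b d (fun x => f x - ∑ i ∈ s, c i * g i x) =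
      mu b d f - ∑ i ∈ s, c i * mu b d (g i) := by
    have hl : ∀ l, muL b d l (fun x => f x - ∑ i ∈ s, c i * g i x)
        = muL b d l f - ∑ i ∈ s, c i * muL b d l (g i) := by
      intro l
      unfold muL
      simp only [mul_sub, Finset.sum_sub_distrib, sub_div, Finset.mul_sum, ← mul_div_assoc,
        Finset.sum_div]
      congr 1
      rw [Finset.sum_comm]
      refine Finset.sum_congr rfl fun i _ => Finset.sum_congr rfl fun k _ => ?_
      ring
    unfold mu
    simp only [hl]
    have hs : ∀ i ∈ s, Summable (fun l => c i * muL b d l (g i)) := fun i hi =>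
      (muL_summable b d hb hd hdb _ (hg i hi)).mul_left _
    rw [Summable.tsum_sub (muL_summable b d hb hd hdb _ hf) (summable_sum hs),
      Summable.tsum_finsetSum hs]
    simp only [tsum_mul_left]
  rw [← e]
  exact mu_bound b d hb hd hdb _ C h

lemma leadF_bdd (b d : ℕ) : BddI (leadF b d) := by
  refine ⟨b, fun x hx => ?_⟩
  unfold leadF
  refine (Finset.abs_sum_le_sum_abs _ _).trans ?_
  have : ∀ n ∈ Finset.Ico 1 b, |vOk d n * (1 / ((n : ℝ) + x))| ≤ 1 := by
    intro n hn
    have hn1 : (1 : ℝ) ≤ n := by exact_mod_cast (Finset.mem_Ico.1 hn).1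
    have hx0 := hx.1
    rw [abs_mul, abs_of_nonneg (vOk_nonneg d n), abs_of_nonneg (by positivity)]
    refine mul_le_one₀ (vOk_le_one d n) (by positivity) ?_
    rw [div_le_one (by positivity)]; linarith
  refine (Finset.sum_le_card_nsmul _ _ 1 this).trans ?_
  simp

lemma partial_irwin (b d L : ℕ) (hb : 2 ≤ b) (hd : 1 ≤ d) :
    ∑ m ∈ Finset.range (b ^ L),
      (if 0 < m ∧ (Nat.digits b m).count d = 0 then (1 : ℝ) / m else 0)
      = ∑ l ∈ Finset.range L, muL b d l (leadF b d) := by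
  have hb0 : (0 : ℝ) < b := by positivity
  induction L with
  | zero => simp
  | succ L ih =>
    rw [Finset.sum_range_succ, ← ih, pow_succ', sum_range_mul_aux, Finset.range_eq_Ico,
      Finset.sum_eq_sum_Ico_succ_bot (by omega)]
    congr 1
    · simp
    · unfold muL leadF
      simp only [Finset.mul_sum]
      rw [Finset.sum_comm (s := Finset.range (b ^ L)), Finset.sum_div]
      refine Finset.sum_congr rfl fun a ha => ?_
      rw [Finset.sum_div]
      refine Finset.sum_congr rfl fun k hk => ?_
      have ha' := Finset.mem_Ico.1 ha
      have ha1 : 1 ≤ a := by omega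
      have hp : 0 < a * b ^ L + k := by positivity
      have hw := wOk_lead b d L a k hb hd ha'.2 (Finset.mem_range.1 hk)
      have : (if 0 < a * b ^ L + k ∧ (Nat.digits b (a * b ^ L + k)).count d = 0
          then (1 : ℝ) / ((a * b ^ L + k : ℕ) : ℝ) else 0)
          = wOk b d (a * b ^ L + k) * (1 / ((a * b ^ L + k : ℕ) : ℝ)) := by
        unfold wOk
        simp only [hp, true_and]
        split_ifs <;> simp
      rw [this, hw]
      have ha2 : (0 : ℝ) < a := by exact_mod_cast ha1
      push_cast
      field_simp

lemma irwin_eq_mu (b d : ℕ) (hb : 2 ≤ b) (hd : 1 ≤ d) (hdb : d < b) :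
    irwinSum b d 0 = mu b d (leadF b d) := by
  unfold irwinSum
  refine HasSum.tsum_eq ?_
  have hnn : ∀ m : ℕ, 0 ≤ (if 0 < m ∧ (Nat.digits b m).count d = 0 then (1 : ℝ) / m else 0) := by
    intro m; split_ifs <;> positivity
  rw [hasSum_iff_tendsto_nat_of_nonneg hnn]
  have hmono : Monotone (fun n => ∑ m ∈ Finset.range n,
      (if 0 < m ∧ (Nat.digits b m).count d = 0 then (1 : ℝ) / m else 0)) := by
    refine monotone_nat_of_le_succ fun n => ?_
    rw [Finset.sum_range_succ]
    linarith [hnn n]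
  rw [tendsto_iff_tendsto_subseq_of_monotone hmono
    (tendsto_pow_atTop_atTop_of_one_lt (show 1 < b by omega))]
  have := (muL_summable b d hb hd hdb _ (leadF_bdd b d)).hasSum.tendsto_sum_nat
  refine this.congr fun L => ?_
  exact (partial_irwin b d L hb hd).symm


/-- Bernoulli polynomials as real functions (degree at most six). -/
noncomputable def BP : ℕ → ℝ → ℝ
  | 0 => fun x => x - 1 / 2
  | 1 => fun x => x ^ 2 - x + 1 / 6
  | 2 => fun x => x ^ 3 - 3 / 2 * x ^ 2 + 1 / 2 * x
  | 3 => fun x => x ^ 4 - 2 * x ^ 3 + x ^ 2 - 1 / 30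
  | 4 => fun x => x ^ 5 - 5 / 2 * x ^ 4 + 5 / 3 * x ^ 3 - 1 / 6 * x
  | _ => fun x => x ^ 6 - 3 * x ^ 5 + 5 / 2 * x ^ 4 - 1 / 2 * x ^ 2 + 1 / 42

/-- truncated asymptotic expansion of digamma at `m + x`. -/
noncomputable def HH (x m : ℝ) : ℝ :=
  Real.log m + ∑ j ∈ Finset.range 6, (-1) ^ j * BP j x / ((j : ℝ) + 1) * (1 / m) ^ (j + 1)

/-- remainder polynomial. -/
noncomputable def remQ (x t : ℝ) : ℝ :=
  (1/8) + (121/180)*t + (11/24)*t*x + (-1/2)*t*x^2 + (-7/3)*t*x^3 + (7/6)*t*x^4 + (7)*t*x^5 +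
    (-49/6)*t*x^6 + (5/2)*t*x^7 + (163/120)*t^2 + (157/180)*t^2*x + (-2/3)*t^2*x^2 +
    (-13/6)*t^2*x^3 + (7/6)*t^2*x^4 + (259/30)*t^2*x^5 + (-21/2)*t^2*x^6 + (10/3)*t^2*x^7 +
    (41/30)*t^3 + (167/120)*t^3*x + (-3/10)*t^3*x^2 + (-4/3)*t^3*x^3 + (1/2)*t^3*x^4 +
    (63/10)*t^3*x^5 + (-77/10)*t^3*x^6 + (5/2)*t^3*x^7 + (25/36)*t^4 + (41/30)*t^4*x +
    (-1/20)*t^4*x^2 + (-1/2)*t^4*x^3 + (1/12)*t^4*x^4 + (5/2)*t^4*x^5 + (-91/30)*t^4*x^6 +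
    (1)*t^4*x^7 + (1/7)*t^5 + (25/36)*t^5*x + (-1/12)*t^5*x^3 + (5/12)*t^5*x^5 + (-1/2)*t^5*x^6 +
    (1/6)*t^5*x^7 + (1/7)*t^6*x + (1/6)*x + (-7/6)*x^3 + (7/2)*x^5 + (-7/2)*x^6 + (1)*x^7

lemma remQ_bdd : ∃ C : ℝ, ∀ x ∈ Set.Icc (0 : ℝ) 1, ∀ t ∈ Set.Icc (0 : ℝ) 1, |remQ x t| ≤ C := by
  have hc : ContinuousOn (fun p : ℝ × ℝ => remQ p.1 p.2)
      (Set.Icc (0 : ℝ) 1 ×ˢ Set.Icc (0 : ℝ) 1) := by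
    apply Continuous.continuousOn
    unfold remQ
    fun_prop
  obtain ⟨C, hC⟩ := (isCompact_Icc.prod isCompact_Icc).exists_bound_of_continuousOn hc
  exact ⟨C, fun x hx t ht => by simpa using hC (x, t) ⟨hx, ht⟩⟩

lemma rem_identity (x t : ℝ) (h1 : 1 + x * t ≠ 0) (h2 : 1 + t ≠ 0) :
    (t - t ^ 2 / 2 + t ^ 3 / 3 - t ^ 4 / 4 + t ^ 5 / 5 - t ^ 6 / 6 + t ^ 7 / 7)
      + ∑ j ∈ Finset.range 6, (-1) ^ j * BP j x / ((j : ℝ) + 1)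
        * ((t / (1 + t)) ^ (j + 1) - t ^ (j + 1))
      - t / (1 + x * t)
      = t ^ 8 * remQ x t / ((1 + x * t) * (1 + t) ^ 6) := by
  simp only [Finset.sum_range_succ, Finset.sum_range_zero, BP, remQ]
  push_cast
  have h1' : 1 + t * x ≠ 0 := by rwa [mul_comm]
  field_simp
  ring

lemma log_taylor (t : ℝ) (h0 : 0 ≤ t) (h1 : t ≤ 1 / 2) :
    |Real.log (1 + t) -
      (t - t ^ 2 / 2 + t ^ 3 / 3 - t ^ 4 / 4 + t ^ 5 / 5 - t ^ 6 / 6 + t ^ 7 / 7)| ≤ 2 * t ^ 8 := by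
  have habs : |-t| = t := by rw [abs_neg, abs_of_nonneg h0]
  have h := Real.abs_log_sub_add_sum_range_le (x := -t) (by rw [habs]; linarith) 7
  rw [habs] at h
  simp only [Finset.sum_range_succ, Finset.sum_range_zero] at h
  push_cast at h
  have h2 : t ^ (7 + 1) / (1 - t) ≤ 2 * t ^ 8 := by
    rw [div_le_iff₀ (by linarith)]
    have := pow_nonneg h0 8
    have e : t ^ (7 + 1) = t ^ 8 := by norm_num
    nlinarith [mul_nonneg this (show 0 ≤ 1 - 2 * t by linarith)]
  refine le_trans (le_of_eq ?_) (h.trans h2)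
  congr 1
  rw [sub_neg_eq_add]
  ring

lemma em_core : ∃ C : ℝ, 0 ≤ C ∧ ∀ x ∈ Set.Icc (0 : ℝ) 1, ∀ t ∈ Set.Icc (0 : ℝ) (1 / 2),
    |Real.log (1 + t) + ∑ j ∈ Finset.range 6, (-1) ^ j * BP j x / ((j : ℝ) + 1)
        * ((t / (1 + t)) ^ (j + 1) - t ^ (j + 1)) - t / (1 + x * t)| ≤ C * t ^ 8 := by
  obtain ⟨C, hC⟩ := remQ_bdd
  have hC0 : 0 ≤ C := (abs_nonneg _).trans (hC 0 (by simp) 0 (by simp))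
  refine ⟨C + 2, by linarith, fun x hx t ht => ?_⟩
  have ht0 := ht.1
  have hx0 := hx.1
  have hxt : 0 ≤ x * t := mul_nonneg hx0 ht0
  have hid := rem_identity x t (by positivity) (by positivity)
  have hlog := log_taylor t ht.1 ht.2
  have hQ := hC x hx t ⟨ht.1, by linarith [ht.2]⟩
  have hden : 1 ≤ (1 + x * t) * (1 + t) ^ 6 :=
    one_le_mul_of_one_le_of_one_le (by linarith) (one_le_pow₀ (by linarith))
  have hb : |t ^ 8 * remQ x t / ((1 + x * t) * (1 + t) ^ 6)| ≤ C * t ^ 8 := by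
    rw [abs_div, abs_mul, abs_of_nonneg (pow_nonneg ht0 8), abs_of_pos (a := _ * _) (by positivity),
      div_le_iff₀ (by positivity)]
    have : 0 ≤ C * t ^ 8 := by positivity
    nlinarith [mul_le_mul_of_nonneg_left hQ (pow_nonneg ht0 8)]
  rw [← hid] at hb
  rw [abs_le] at *
  constructor <;> linarith [hlog.1, hlog.2, hb.1, hb.2]

lemma em_step : ∃ C : ℝ, 0 ≤ C ∧ ∀ m : ℕ, 2 ≤ m → ∀ x ∈ Set.Icc (0 : ℝ) 1,
    |1 / ((m : ℝ) + x) - (HH x ((m : ℝ) + 1) - HH x m)|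
      ≤ C * (1 / (m : ℝ) ^ 7 - 1 / ((m : ℝ) + 1) ^ 7) := by
  obtain ⟨C, hC0, hC⟩ := em_core
  refine ⟨C * 128, by positivity, fun m hm x hx => ?_⟩
  have hm2 : (2 : ℝ) ≤ m := by exact_mod_cast hm
  have hmpos : (0 : ℝ) < m := by linarith
  have hx0 := hx.1
  obtain ⟨t, ht⟩ : ∃ t : ℝ, t = 1 / m := ⟨_, rfl⟩
  have ht0 : 0 < t := by rw [ht]; positivity
  have ht1 : t ≤ 1 / 2 := by rw [ht]; exact one_div_le_one_div_of_le (by norm_num) hm2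
  have hmt : (m : ℝ) = 1 / t := by rw [ht]; simp
  have h := hC x hx t ⟨ht0.le, ht1⟩
  have e1 : 1 / ((m : ℝ) + x) = t / (1 + x * t) := by
    rw [hmt]; field_simp
  have e2 : 1 / ((m : ℝ) + 1) = t / (1 + t) := by
    rw [hmt]; field_simp
  have e3 : Real.log ((m : ℝ) + 1) - Real.log m = Real.log (1 + t) := by
    rw [← Real.log_div (by positivity) (by positivity), ht]
    congr 1; field_simp
  have e4 : HH x ((m : ℝ) + 1) - HH x m = Real.log (1 + t)
      + ∑ j ∈ Finset.range 6, (-1) ^ j * BP j x / ((j : ℝ) + 1)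
        * ((t / (1 + t)) ^ (j + 1) - t ^ (j + 1)) := by
    unfold HH
    rw [← e3, e2, ← ht]
    simp only [mul_sub, Finset.sum_sub_distrib]
    ring
  rw [e1, e4, abs_sub_comm]
  refine h.trans ?_
  rw [mul_assoc]
  refine mul_le_mul_of_nonneg_left ?_ hC0
  have e5 : 1 / (m : ℝ) ^ 7 - 1 / ((m : ℝ) + 1) ^ 7 = t ^ 7 * (1 - 1 / (1 + t) ^ 7) := by
    rw [← one_div_pow, ← one_div_pow, e2, ← ht]
    field_simp
  rw [e5]
  have h7 : (1 + t) ^ 7 ≤ 128 := by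
    calc (1 + t) ^ 7 ≤ 2 ^ 7 := pow_le_pow_left₀ (by linarith) (by linarith) 7
      _ = 128 := by norm_num
  have h7' : 1 + 7 * t ≤ (1 + t) ^ 7 := by
    have := one_add_mul_le_pow (a := t) (by linarith) 7
    simpa using this
  have h7p : 0 < (1 + t) ^ 7 := by positivity
  have key : t ≤ 128 * (1 - 1 / (1 + t) ^ 7) := by
    have : 1 - 1 / (1 + t) ^ 7 = ((1 + t) ^ 7 - 1) / (1 + t) ^ 7 := by field_simp
    rw [this, ← mul_div_assoc, le_div_iff₀ h7p]
    nlinarith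
  calc t ^ 8 = t ^ 7 * t := by ring
    _ ≤ t ^ 7 * (128 * (1 - 1 / (1 + t) ^ 7)) := mul_le_mul_of_nonneg_left key (by positivity)
    _ = _ := by ring

/-- telescoping of approximations. -/
lemma telescope_bound (f g r : ℕ → ℝ) (N M : ℕ) (hNM : N ≤ M)
    (h : ∀ m, N ≤ m → |f m - (g (m + 1) - g m)| ≤ r m - r (m + 1)) :
    |∑ m ∈ Finset.Ico N M, f m - (g M - g N)| ≤ r N - r M := by
  induction M, hNM using Nat.le_induction with
  | base => simp
  | succ M hM ih =>
    rw [Finset.sum_Ico_succ_top hM]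
    have h2 := h M hM
    rw [abs_le] at *
    constructor <;> linarith [h2.1, h2.2, ih.1, ih.2]

lemma em_sum : ∃ C : ℝ, 0 ≤ C ∧ ∀ N M : ℕ, 2 ≤ N → N ≤ M → ∀ x ∈ Set.Icc (0 : ℝ) 1,
    |∑ m ∈ Finset.Ico N M, 1 / ((m : ℝ) + x) - (HH x M - HH x N)| ≤ C / (N : ℝ) ^ 7 := by
  obtain ⟨C, hC0, hC⟩ := em_step
  refine ⟨C, hC0, fun N M hN hNM x hx => ?_⟩
  have := telescope_bound (fun m => 1 / ((m : ℝ) + x)) (fun m => HH x m)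
    (fun m => C * (1 / (m : ℝ) ^ 7)) N M hNM (fun m hm => by
      have := hC m (by omega) x hx
      push_cast
      rw [← mul_sub]
      exact this)
  refine this.trans ?_
  have h0 : 0 ≤ C * (1 / (M : ℝ) ^ 7) := by positivity
  have : C * (1 / (N : ℝ) ^ 7) = C / (N : ℝ) ^ 7 := by ring
  linarith

/-- partial sums of zeta values. -/
noncomputable def Sz (s b : ℕ) : ℝ := ∑ n ∈ Finset.Ico 1 b, 1 / (n : ℝ) ^ s

lemma zeta_summable (s : ℕ) (hs : 2 ≤ s) : Summable (fun n : ℕ => 1 / ((n : ℝ) + 1) ^ s) := by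
  have := (summable_nat_add_iff 1).2 (Real.summable_one_div_nat_pow (p := s) |>.2 (by omega))
  simpa using this

lemma Sz_eq (s b : ℕ) : Sz s b = ∑ n ∈ Finset.range (b - 1), 1 / ((n : ℝ) + 1) ^ s := by
  unfold Sz
  rw [Finset.sum_Ico_eq_sum_range]
  refine Finset.sum_congr rfl fun n _ => ?_
  push_cast
  rw [add_comm]

lemma Sz_tendsto (s : ℕ) (hs : 2 ≤ s) : Tendsto (Sz s) atTop (nhds (zetaR s)) := by
  have h := (zeta_summable s hs).hasSum.tendsto_sum_nat
  have h2 := h.comp (tendsto_sub_atTop_nat 1)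
  refine h2.congr fun b => ?_
  rw [Sz_eq]; rfl

lemma Sz_le (s b : ℕ) (hs : 2 ≤ s) : Sz s b ≤ zetaR s := by
  rw [Sz_eq]
  exact (zeta_summable s hs).sum_le_tsum _ (fun n _ => by positivity)

lemma tail_bound (s : ℕ) (hs : 2 ≤ s) (g r : ℕ → ℝ) (hg : Tendsto g atTop (nhds 0))
    (hr : ∀ m, 0 ≤ r m)
    (h : ∀ m : ℕ, 1 ≤ m → |1 / (m : ℝ) ^ s - (g (m + 1) - g m)| ≤ r m - r (m + 1))
    (b : ℕ) (hb : 1 ≤ b) : |zetaR s - Sz s b + g b| ≤ r b := by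
  have hlim : Tendsto (fun M => |Sz s M - Sz s b - (g M - g b)|) atTop
      (nhds |zetaR s - Sz s b - (0 - g b)|) :=
    (((Sz_tendsto s hs).sub_const _).sub (hg.sub_const _)).abs
  have : |zetaR s - Sz s b - (0 - g b)| ≤ r b := by
    refine le_of_tendsto hlim ?_
    filter_upwards [eventually_ge_atTop b] with M hM
    have h1 := telescope_bound (fun m => 1 / (m : ℝ) ^ s) g r b M hM (fun m hm => h m (by omega))
    have h2 : ∑ m ∈ Finset.Ico b M, 1 / (m : ℝ) ^ s = Sz s M - Sz s b := by
      unfold Sz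
      rw [← Finset.sum_Ico_consecutive _ hb hM]; ring
    rw [h2] at h1
    linarith [hr M]
  convert this using 2
  ring

lemma inv_pow_tendsto (c : ℝ) (k : ℕ) (hk : k ≠ 0) :
    Tendsto (fun m : ℕ => c * (1 / (m : ℝ) ^ k)) atTop (nhds 0) := by
  have : Tendsto (fun m : ℕ => ((m : ℝ) ^ k)⁻¹) atTop (nhds 0) :=
    tendsto_inv_atTop_zero.comp ((tendsto_pow_atTop hk).comp tendsto_natCast_atTop_atTop)
  simpa using this.const_mul c

lemma tail2 (b : ℕ) (hb : 1 ≤ b) :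
    |zetaR 2 - Sz 2 b - (1 / (b : ℝ) + 1 / 2 * (1 / (b : ℝ) ^ 2) + 1 / 6 * (1 / (b : ℝ) ^ 3))|
      ≤ 1 / (b : ℝ) ^ 5 := by
  have := tail_bound 2 le_rfl
    (fun m => (-1) * (1 / (m : ℝ) ^ 1) + (-1 / 2) * (1 / (m : ℝ) ^ 2) + (-1 / 6) * (1 / (m : ℝ) ^ 3))
    (fun m => 1 / (m : ℝ) ^ 5)
    (by simpa using ((inv_pow_tendsto (-1) 1 (by norm_num)).add
      (inv_pow_tendsto (-1 / 2) 2 (by norm_num))).add (inv_pow_tendsto (-1 / 6) 3 (by norm_num)))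
    (fun m => by positivity) (fun m hm => by
      have hm0 : (0 : ℝ) < m := by exact_mod_cast hm
      push_cast
      generalize (m : ℝ) = y at hm0
      have e : 1 / y ^ 2 - ((-1) * (1 / (y + 1) ^ 1) + (-1 / 2) * (1 / (y + 1) ^ 2)
          + (-1 / 6) * (1 / (y + 1) ^ 3) - ((-1) * (1 / y ^ 1) + (-1 / 2) * (1 / y ^ 2)
          + (-1 / 6) * (1 / y ^ 3))) = - (1 / (6 * y ^ 3 * (y + 1) ^ 3)) := by
        field_simp
        ring
      rw [e, abs_neg, abs_of_nonneg (by positivity), ← sub_nonneg]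
      have e2 : 1 / y ^ 5 - 1 / (y + 1) ^ 5 - 1 / (6 * y ^ 3 * (y + 1) ^ 3)
          = (29 * y ^ 4 + 58 * y ^ 3 + 59 * y ^ 2 + 30 * y + 6) / (6 * y ^ 5 * (y + 1) ^ 5) := by
        field_simp
        ring
      rw [e2]; positivity) b hb
  convert this using 2
  ring

lemma tail3 (b : ℕ) (hb : 1 ≤ b) :
    |zetaR 3 - Sz 3 b - (1 / 2 * (1 / (b : ℝ) ^ 2) + 1 / 2 * (1 / (b : ℝ) ^ 3))|
      ≤ 1 / (b : ℝ) ^ 4 := by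
  have := tail_bound 3 (by norm_num)
    (fun m => (-1 / 2) * (1 / (m : ℝ) ^ 2) + (-1 / 2) * (1 / (m : ℝ) ^ 3))
    (fun m => 1 / (m : ℝ) ^ 4)
    (by simpa using
      (inv_pow_tendsto (-1 / 2) 2 (by norm_num)).add (inv_pow_tendsto (-1 / 2) 3 (by norm_num)))
    (fun m => by positivity) (fun m hm => by
      have hm0 : (0 : ℝ) < m := by exact_mod_cast hm
      push_cast
      generalize (m : ℝ) = y at hm0
      have e : 1 / y ^ 3 - ((-1 / 2) * (1 / (y + 1) ^ 2)
          + (-1 / 2) * (1 / (y + 1) ^ 3) - ((-1 / 2) * (1 / y ^ 2)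
          + (-1 / 2) * (1 / y ^ 3))) = (2 * y + 1) / (2 * y ^ 3 * (y + 1) ^ 3) := by
        field_simp
        ring
      rw [e, abs_of_nonneg (by positivity), ← sub_nonneg]
      have e2 : 1 / y ^ 4 - 1 / (y + 1) ^ 4 - (2 * y + 1) / (2 * y ^ 3 * (y + 1) ^ 3)
          = (6 * y ^ 3 + 9 * y ^ 2 + 7 * y + 2) / (2 * y ^ 4 * (y + 1) ^ 4) := by
        field_simp
        ring
      rw [e2]; positivity) b hb
  convert this using 2
  ring

lemma tail_big (s : ℕ) (hs : 4 ≤ s) (b : ℕ) (hb : 1 ≤ b) :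
    |zetaR s - Sz s b| ≤ 4 * (1 / (b : ℝ) ^ 2) := by
  have := tail_bound s (by omega) (fun _ => 0) (fun m => 4 * (1 / (m : ℝ) ^ 2))
    tendsto_const_nhds (fun m => by positivity) (fun m hm => by
      have hm0 : (1 : ℝ) ≤ m := by exact_mod_cast hm
      push_cast
      generalize (m : ℝ) = y at hm0
      have hy0 : 0 < y := by linarith
      rw [sub_zero, sub_zero, abs_of_nonneg (by positivity)]
      have h1 : 1 / y ^ s ≤ 1 / y ^ 4 :=
        one_div_le_one_div_of_le (by positivity) (pow_le_pow_right₀ hm0 hs)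
      refine h1.trans ?_
      rw [← sub_nonneg]
      have e2 : 4 * (1 / y ^ 2) - 4 * (1 / (y + 1) ^ 2) - 1 / y ^ 4
          = (8 * y ^ 3 + 3 * y ^ 2 - 2 * y - 1) / (y ^ 4 * (y + 1) ^ 2) := by
        field_simp
        ring
      rw [e2]
      apply div_nonneg _ (by positivity)
      nlinarith [pow_pos hy0 3, mul_pos hy0 hy0]) b hb
  simpa using this


lemma bddI_of_continuous (f : ℝ → ℝ) (hf : Continuous f) : BddI f := by
  obtain ⟨C, hC⟩ := (isCompact_Icc (a := (0 : ℝ)) (b := 1)).exists_bound_of_continuousOn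
    hf.continuousOn
  exact ⟨C, fun x hx => by simpa using hC x hx⟩

lemma BP_continuous (j : ℕ) : Continuous (BP j) := by
  match j with
  | 0 => simp only [BP]; fun_prop
  | 1 => simp only [BP]; fun_prop
  | 2 => simp only [BP]; fun_prop
  | 3 => simp only [BP]; fun_prop
  | 4 => simp only [BP]; fun_prop
  | n + 5 => simp only [BP]; fun_prop

lemma geom_rem (y q : ℝ) (hy : 0 ≤ y) (hq : 0 < q) :
    |1 / (q + y) - ∑ j ∈ Finset.range 6, (-1) ^ j * y ^ j * (1 / q) ^ (j + 1)|
      ≤ y ^ 6 * (1 / q) ^ 7 := by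
  have hqy : 0 < q + y := by linarith
  have e : 1 / (q + y) - ∑ j ∈ Finset.range 6, (-1) ^ j * y ^ j * (1 / q) ^ (j + 1)
      = y ^ 6 * (1 / q) ^ 6 * (1 / (q + y)) := by
    have e0 : 1 / (q + y) = 1 / q - 1 / q * y * (1 / (q + y)) := by
      field_simp
      ring
    simp only [Finset.sum_range_succ, Finset.sum_range_zero]
    generalize 1 / (q + y) = s at e0
    generalize 1 / q = r at e0
    linear_combination (1 - r * y + (r * y) ^ 2 - (r * y) ^ 3 + (r * y) ^ 4 - (r * y) ^ 5) * e0
  rw [e, abs_of_nonneg (by positivity), pow_succ (1 / q) 6, ← mul_assoc]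
  have : 1 / (q + y) ≤ 1 / q := one_div_le_one_div_of_le hq (by linarith)
  exact mul_le_mul_of_nonneg_left this (by positivity)

lemma Dsum_bound (b d : ℕ) (hb : 2 ≤ b) (hd : 1 ≤ d) (hdb : d < b) (x : ℝ)
    (hx : x ∈ Set.Icc (0 : ℝ) 1) :
    |∑ n ∈ Finset.Ico 1 b, vOk d n * (1 / ((n : ℝ) * b + (d + x)))
      - ∑ j ∈ Finset.range 6, ((-1) ^ j * (1 / (b : ℝ)) ^ (j + 1)
          * (Sz (j + 1) b - 1 / (d : ℝ) ^ (j + 1))) * ((d : ℝ) + x) ^ j|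
      ≤ ((d : ℝ) + 1) ^ 6 * zetaR 7 * (1 / (b : ℝ)) ^ 7 := by
  have hb0 : (0 : ℝ) < b := by positivity
  have hx0 := hx.1
  have hx1 := hx.2
  have e1 : ∑ j ∈ Finset.range 6, ((-1) ^ j * (1 / (b : ℝ)) ^ (j + 1)
          * (Sz (j + 1) b - 1 / (d : ℝ) ^ (j + 1))) * ((d : ℝ) + x) ^ j
      = ∑ n ∈ Finset.Ico 1 b, vOk d n *
        ∑ j ∈ Finset.range 6, (-1) ^ j * ((d : ℝ) + x) ^ j * (1 / ((n : ℝ) * b)) ^ (j + 1) := by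
    simp only [Finset.mul_sum]
    rw [Finset.sum_comm]
    refine Finset.sum_congr rfl fun j _ => ?_
    unfold Sz
    rw [← sum_vOk_Ico b d hd hdb (fun n => 1 / (n : ℝ) ^ (j + 1)), Finset.mul_sum, Finset.sum_mul]
    refine Finset.sum_congr rfl fun n _ => ?_
    simp only [one_div, mul_inv, mul_pow, inv_pow]
    ring
  rw [e1, ← Finset.sum_sub_distrib]
  refine (Finset.abs_sum_le_sum_abs _ _).trans ?_
  have h2 : ∀ n ∈ Finset.Ico 1 b,
      |vOk d n * (1 / ((n : ℝ) * b + (d + x))) - vOk d n *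
        ∑ j ∈ Finset.range 6, (-1) ^ j * ((d : ℝ) + x) ^ j * (1 / ((n : ℝ) * b)) ^ (j + 1)|
      ≤ (((d : ℝ) + 1) ^ 6 * (1 / (b : ℝ)) ^ 7) * (1 / (n : ℝ) ^ 7) := by
    intro n hn
    have hn1 : (1 : ℝ) ≤ n := by exact_mod_cast (Finset.mem_Ico.1 hn).1
    have hn0 : (0 : ℝ) < n := by linarith
    rw [← mul_sub, abs_mul, abs_of_nonneg (vOk_nonneg d n)]
    have h3 := geom_rem ((d : ℝ) + x) ((n : ℝ) * b) (by positivity) (by positivity)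
    have h4 : ((d : ℝ) + x) ^ 6 ≤ ((d : ℝ) + 1) ^ 6 :=
      pow_le_pow_left₀ (by positivity) (by linarith) 6
    calc _ ≤ 1 * |1 / ((n : ℝ) * b + (d + x)) -
        ∑ j ∈ Finset.range 6, (-1) ^ j * ((d : ℝ) + x) ^ j * (1 / ((n : ℝ) * b)) ^ (j + 1)| :=
          mul_le_mul_of_nonneg_right (vOk_le_one d n) (abs_nonneg _)
      _ ≤ ((d : ℝ) + x) ^ 6 * (1 / ((n : ℝ) * b)) ^ 7 := by rw [one_mul]; exact h3
      _ ≤ ((d : ℝ) + 1) ^ 6 * (1 / ((n : ℝ) * b)) ^ 7 :=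
          mul_le_mul_of_nonneg_right h4 (by positivity)
      _ = _ := by
          simp only [one_div, mul_inv, mul_pow, inv_pow]
          ring
  refine (Finset.sum_le_sum h2).trans ?_
  rw [← Finset.mul_sum]
  have := Sz_le 7 b (by norm_num)
  unfold Sz at this
  calc _ ≤ (((d : ℝ) + 1) ^ 6 * (1 / (b : ℝ)) ^ 7) * zetaR 7 :=
        mul_le_mul_of_nonneg_left this (by positivity)
    _ = _ := by ring

lemma trf_leadF (b d : ℕ) (hb : 2 ≤ b) (hd : 1 ≤ d) (hdb : d < b) (x : ℝ) (hx : 0 ≤ x) :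
    trf b d (leadF b d) x = ∑ m ∈ Finset.Ico b (b * b), 1 / ((m : ℝ) + x)
      - ∑ m ∈ Finset.Ico (d * b) ((d + 1) * b), 1 / ((m : ℝ) + x)
      - ∑ n ∈ Finset.Ico 1 b, vOk d n * (1 / ((n : ℝ) * b + (d + x))) := by
  have hb0 : (0 : ℝ) < b := by positivity
  have e1 : trf b d (leadF b d) x = ∑ n ∈ Finset.Ico 1 b, vOk d n *
      ∑ a ∈ Finset.range b, vOk d a * (1 / ((n : ℝ) * b + (a + x))) := by
    unfold trf leadF
    simp only [Finset.mul_sum, Finset.sum_div]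
    rw [Finset.sum_comm]
    refine Finset.sum_congr rfl fun n hn => Finset.sum_congr rfl fun a _ => ?_
    have hn1 : (1 : ℝ) ≤ n := by exact_mod_cast (Finset.mem_Ico.1 hn).1
    have hn0 : (0 : ℝ) < n := by linarith
    field_simp
  have e2 : ∀ n : ℕ, ∑ a ∈ Finset.range b, vOk d a * (1 / ((n : ℝ) * b + (a + x)))
      = ∑ a ∈ Finset.range b, 1 / (((n * b + a : ℕ) : ℝ) + x) - 1 / ((n : ℝ) * b + (d + x)) := by
    intro n
    rw [sum_vOk b d hdb (fun a => 1 / ((n : ℝ) * b + ((a : ℝ) + x)))]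
    congr 1
    refine Finset.sum_congr rfl fun a _ => ?_
    push_cast
    rw [add_assoc]
  rw [e1]
  simp only [e2, mul_sub, Finset.sum_sub_distrib]
  congr 1
  rw [sum_vOk_Ico b d hd hdb (fun n => ∑ a ∈ Finset.range b, 1 / (((n * b + a : ℕ) : ℝ) + x))]
  congr 1
  · have h := sum_range_mul_aux (fun m => 1 / ((m : ℝ) + x)) b b
    rw [Finset.sum_Ico_eq_sub _ (Nat.le_mul_of_pos_left b (by omega)), h,
      Finset.sum_Ico_eq_sub _ (by omega : 1 ≤ b)]
    simp
  · rw [Finset.sum_Ico_eq_sum_range]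
    have : (d + 1) * b - d * b = b := by rw [Nat.add_mul]; omega
    rw [this]

/-- coefficients of the Bernoulli part. -/
noncomputable def alphaC (b d j : ℕ) : ℝ :=
  (-1) ^ j / ((j : ℝ) + 1) * (1 / (b : ℝ)) ^ (j + 1)
    * ((1 / (b : ℝ)) ^ (j + 1) - 1 - (1 / ((d : ℝ) + 1)) ^ (j + 1) + (1 / (d : ℝ)) ^ (j + 1))

/-- coefficients of the digit part. -/
noncomputable def gammaC (b d j : ℕ) : ℝ :=
  (-1) ^ j * (1 / (b : ℝ)) ^ (j + 1) * (Sz (j + 1) b - 1 / (d : ℝ) ^ (j + 1))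

lemma HH_comb (b d : ℕ) (hb : 2 ≤ b) (hd : 1 ≤ d) (x : ℝ) :
    HH x ((b * b : ℕ) : ℝ) - HH x b - (HH x (((d + 1) * b : ℕ) : ℝ) - HH x ((d * b : ℕ) : ℝ))
      = (Real.log b - Real.log (1 + 1 / (d : ℝ)))
        + ∑ j ∈ Finset.range 6, alphaC b d j * BP j x := by
  have hb0 : (0 : ℝ) < b := by positivity
  have hd0 : (0 : ℝ) < d := by exact_mod_cast hd
  have hl : Real.log (1 + 1 / (d : ℝ)) = Real.log ((d : ℝ) + 1) - Real.log d := by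
    rw [← Real.log_div (by positivity) (by positivity)]
    congr 1; field_simp
  unfold HH
  push_cast
  rw [Real.log_mul hb0.ne' hb0.ne', Real.log_mul (by positivity) hb0.ne',
    Real.log_mul hd0.ne' hb0.ne', hl]
  have : ∀ j ∈ Finset.range 6, alphaC b d j * BP j x =
      (-1) ^ j * BP j x / ((j : ℝ) + 1) * (1 / ((b : ℝ) * b)) ^ (j + 1)
      - (-1) ^ j * BP j x / ((j : ℝ) + 1) * (1 / (b : ℝ)) ^ (j + 1)
      - (-1) ^ j * BP j x / ((j : ℝ) + 1) * (1 / (((d : ℝ) + 1) * b)) ^ (j + 1)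
      + (-1) ^ j * BP j x / ((j : ℝ) + 1) * (1 / ((d : ℝ) * b)) ^ (j + 1) := by
    intro j _
    unfold alphaC
    simp only [one_div, mul_inv, mul_pow]
    ring
  rw [Finset.sum_congr rfl this]
  simp only [Finset.sum_sub_distrib, Finset.sum_add_distrib]
  ring

lemma trfF_bound (d : ℕ) (hd : 1 ≤ d) : ∃ C : ℝ, ∀ b : ℕ, 2 ≤ b → d < b →
    ∀ x ∈ Set.Icc (0 : ℝ) 1,
    |trf b d (leadF b d) x - ((Real.log b - Real.log (1 + 1 / (d : ℝ)))
        + ∑ j ∈ Finset.range 6, alphaC b d j * BP j x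
        - ∑ j ∈ Finset.range 6, gammaC b d j * ((d : ℝ) + x) ^ j)| ≤ C * (1 / (b : ℝ)) ^ 7 := by
  obtain ⟨C, hC0, hC⟩ := em_sum
  refine ⟨2 * C + ((d : ℝ) + 1) ^ 6 * zetaR 7, fun b hb hdb x hx => ?_⟩
  have hb0 : (0 : ℝ) < b := by positivity
  have hdb1 : b ≤ d * b := Nat.le_mul_of_pos_left b (by omega)
  have h1 := hC b (b * b) hb (Nat.le_mul_of_pos_left b (by omega)) x hx
  have h2 := hC (d * b) ((d + 1) * b) (by omega) (by rw [Nat.add_mul]; omega) x hx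
  have h3 := Dsum_bound b d hb hd hdb x hx
  have h4 := HH_comb b d hb hd x
  have h5 : C / ((d * b : ℕ) : ℝ) ^ 7 ≤ C / (b : ℝ) ^ 7 := by
    have : (b : ℝ) ≤ ((d * b : ℕ) : ℝ) := by exact_mod_cast hdb1
    gcongr
  have h6 : C / (b : ℝ) ^ 7 = C * (1 / (b : ℝ)) ^ 7 := by
    rw [one_div_pow]; ring
  rw [trf_leadF b d hb hd hdb x hx.1]
  change |_ - ∑ j ∈ Finset.range 6, gammaC b d j * ((d : ℝ) + x) ^ j| ≤ _ at h3
  rw [h6] at h1 h5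
  rw [abs_le] at *
  constructor <;> linarith [h1.1, h1.2, h2.1, h2.2, h3.1, h3.2, h5]

/-- Bernoulli moments. -/
noncomputable def beta (b d j : ℕ) : ℝ := mu b d (BP j)
/-- shifted moments. -/
noncomputable def Mom (b d j : ℕ) : ℝ := mu b d (fun x => ((d : ℝ) + x) ^ j)

lemma Mom_zero (b d : ℕ) (hb : 2 ≤ b) (hd : 1 ≤ d) (hdb : d < b) : Mom b d 0 = b := by
  unfold Mom
  simp only [pow_zero]
  exact mu_one b d hb hd hdb

/-- basis functions. -/
noncomputable def gB (d : ℕ) : Bool × ℕ → ℝ → ℝ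
  | (true, j) => BP j
  | (false, j) => fun x => ((d : ℝ) + x) ^ j

lemma mu_comb (b d : ℕ) (hb : 2 ≤ b) (hd : 1 ≤ d) (hdb : d < b) (f : ℝ → ℝ) (p q : ℕ → ℝ) (n : ℕ)
    (C : ℝ) (hf : BddI f)
    (h : ∀ x ∈ Set.Icc (0 : ℝ) 1, |f x - (∑ j ∈ Finset.range n, p j * BP j x
      + ∑ j ∈ Finset.range n, q j * ((d : ℝ) + x) ^ j)| ≤ C) :
    |mu b d f - (∑ j ∈ Finset.range n, p j * beta b d j
      + ∑ j ∈ Finset.range n, q j * Mom b d j)| ≤ C * b := by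
  have := mu_approx b d hb hd hdb ((Finset.univ : Finset Bool) ×ˢ Finset.range n) f (gB d)
    (fun i => if i.1 then p i.2 else q i.2) C hf
    (by
      rintro ⟨i, j⟩ _
      cases i
      · exact bddI_of_continuous _ (by simp only [gB]; fun_prop)
      · exact bddI_of_continuous _ (BP_continuous j))
    (fun x hx => by
      rw [Finset.sum_product]
      simpa [gB] using h x hx)
  rw [Finset.sum_product] at this
  simpa [gB, beta, Mom] using this

lemma irwin_main (d : ℕ) (hd : 1 ≤ d) : ∃ C : ℝ, ∀ b : ℕ, 2 ≤ b → d < b →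
    |irwinSum b d 0 - ((b : ℝ) * (Real.log b - Real.log (1 + 1 / (d : ℝ)))
        + ∑ j ∈ Finset.range 6, alphaC b d j * beta b d j
        - ∑ j ∈ Finset.range 5, gammaC b d (j + 1) * Mom b d (j + 1))|
      ≤ C * (1 / (b : ℝ)) ^ 6 := by
  obtain ⟨C, hC⟩ := trfF_bound d hd
  refine ⟨C, fun b hb hdb => ?_⟩
  have hb0 : (0 : ℝ) < b := by positivity
  obtain ⟨c0, hc0⟩ : ∃ c0, c0 = Real.log b - Real.log (1 + 1 / (d : ℝ)) := ⟨_, rfl⟩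
  have hbd : BddI (trf b d (leadF b d)) := by
    obtain ⟨K, hK⟩ := leadF_bdd b d
    refine ⟨K, fun x hx => ?_⟩
    unfold trf
    rw [abs_div, abs_of_pos hb0, div_le_iff₀ hb0]
    refine (Finset.abs_sum_le_sum_abs _ _).trans ?_
    have : ∀ a ∈ Finset.range b, |vOk d a * leadF b d (((a : ℝ) + x) / b)| ≤ K := by
      intro a ha
      have hab : (a : ℝ) + 1 ≤ b := by exact_mod_cast Finset.mem_range.1 ha
      have hx0 := hx.1
      have hx1 := hx.2
      have hm : ((a : ℝ) + x) / b ∈ Set.Icc (0 : ℝ) 1 :=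
        ⟨by positivity, by rw [div_le_one hb0]; linarith⟩
      rw [abs_mul, abs_of_nonneg (vOk_nonneg d a)]
      have := hK _ hm
      have h0 := abs_nonneg (leadF b d (((a : ℝ) + x) / b))
      nlinarith [vOk_le_one d a, vOk_nonneg d a]
    refine (Finset.sum_le_card_nsmul _ _ K this).trans ?_
    simp [mul_comm]
  have h1 := mu_comb b d hb hd hdb (trf b d (leadF b d)) (alphaC b d)
    (fun j => (if j = 0 then c0 else 0) - gammaC b d j) 6 (C * (1 / (b : ℝ)) ^ 7) hbd
    (fun x hx => by
      have := hC b hb hdb x hx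
      rw [← hc0] at this
      convert this using 2
      simp only [sub_mul, Finset.sum_sub_distrib, ite_mul, zero_mul]
      rw [Finset.sum_ite_eq' (Finset.range 6) 0]
      simp
      ring)
  have h2 : leadF b d 0 = gammaC b d 0 * Mom b d 0 := by
    rw [Mom_zero b d hb hd hdb]
    unfold leadF gammaC Sz
    rw [sum_vOk_Ico b d hd hdb]
    simp
    field_simp
  rw [irwin_eq_mu b d hb hd hdb, mu_self b d hb hd hdb _ (leadF_bdd b d), h2, ← hc0]
  have h3 : C * (1 / (b : ℝ)) ^ 7 * b = C * (1 / (b : ℝ)) ^ 6 := by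
    field_simp
  rw [h3] at h1
  convert h1 using 2
  simp only [sub_mul, Finset.sum_sub_distrib, ite_mul, zero_mul]
  rw [Finset.sum_ite_eq' (Finset.range 6) 0, Finset.sum_range_succ' (fun j => gammaC b d j * Mom b d j)]
  simp [Mom_zero b d hb hd hdb]
  ring


lemma mu_exact (b d : ℕ) (hb : 2 ≤ b) (hd : 1 ≤ d) (hdb : d < b) (f : ℝ → ℝ) (p q : ℕ → ℝ) (n : ℕ)
    (hf : BddI f)
    (h : ∀ x : ℝ, f x = ∑ j ∈ Finset.range n, p j * BP j x
      + ∑ j ∈ Finset.range n, q j * ((d : ℝ) + x) ^ j) :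
    mu b d f = ∑ j ∈ Finset.range n, p j * beta b d j
      + ∑ j ∈ Finset.range n, q j * Mom b d j := by
  have := mu_comb b d hb hd hdb f p q n 0 hf (fun x _ => by rw [h x]; simp)
  rw [zero_mul] at this
  have h0 := abs_nonpos_iff.1 this
  linarith

/-- power sums of shifted integers through Bernoulli polynomials. -/
noncomputable def PS : ℕ → ℝ → ℝ → ℝ
  | 0 => fun N _ => N
  | 6 => fun N x => (((N + x) ^ 7 - 7 / 2 * (N + x) ^ 6 + 7 / 2 * (N + x) ^ 5 - 7 / 6 * (N + x) ^ 3
      + 1 / 6 * (N + x)) - (x ^ 7 - 7 / 2 * x ^ 6 + 7 / 2 * x ^ 5 - 7 / 6 * x ^ 3 + 1 / 6 * x)) / 7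
  | i => fun N x => (BP i (N + x) - BP i x) / ((i : ℝ) + 1)

lemma bp_sum_0 (b : ℝ) (x : ℝ) (N : ℕ) :
    ∑ a ∈ Finset.range N, BP 0 (((a : ℝ) + x) / b)
      = (1) * (PS 1 N x / b ^ 1) + (-1/2) * (PS 0 N x / b ^ 0) := by
  induction N with
  | zero => simp [PS]
  | succ N ih =>
    rw [Finset.sum_range_succ, ih]
    simp only [BP, PS]
    push_cast
    ring

lemma bp_mult_0 (b : ℕ) (hb : 2 ≤ b) (x : ℝ) :
    (∑ a ∈ Finset.range b, BP 0 (((a : ℝ) + x) / b)) / b = (1 / (b : ℝ)) ^ 1 * BP 0 x := by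
  have hb0 : (b : ℝ) ≠ 0 := by positivity
  rw [bp_sum_0]
  simp only [BP, PS]
  push_cast
  field_simp
  ring

lemma bp_sum_1 (b : ℝ) (x : ℝ) (N : ℕ) :
    ∑ a ∈ Finset.range N, BP 1 (((a : ℝ) + x) / b)
      = (1) * (PS 2 N x / b ^ 2) + (-1) * (PS 1 N x / b ^ 1) + (1/6) * (PS 0 N x / b ^ 0) := by
  induction N with
  | zero => simp [PS]
  | succ N ih =>
    rw [Finset.sum_range_succ, ih]
    simp only [BP, PS]
    push_cast
    ring

lemma bp_mult_1 (b : ℕ) (hb : 2 ≤ b) (x : ℝ) :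
    (∑ a ∈ Finset.range b, BP 1 (((a : ℝ) + x) / b)) / b = (1 / (b : ℝ)) ^ 2 * BP 1 x := by
  have hb0 : (b : ℝ) ≠ 0 := by positivity
  rw [bp_sum_1]
  simp only [BP, PS]
  push_cast
  field_simp
  ring

lemma bp_sum_2 (b : ℝ) (x : ℝ) (N : ℕ) :
    ∑ a ∈ Finset.range N, BP 2 (((a : ℝ) + x) / b)
      = (1) * (PS 3 N x / b ^ 3) + (-3/2) * (PS 2 N x / b ^ 2) + (1/2) * (PS 1 N x / b ^ 1) := by
  induction N with
  | zero => simp [PS]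
  | succ N ih =>
    rw [Finset.sum_range_succ, ih]
    simp only [BP, PS]
    push_cast
    ring

lemma bp_mult_2 (b : ℕ) (hb : 2 ≤ b) (x : ℝ) :
    (∑ a ∈ Finset.range b, BP 2 (((a : ℝ) + x) / b)) / b = (1 / (b : ℝ)) ^ 3 * BP 2 x := by
  have hb0 : (b : ℝ) ≠ 0 := by positivity
  rw [bp_sum_2]
  simp only [BP, PS]
  push_cast
  field_simp
  ring

lemma bp_sum_3 (b : ℝ) (x : ℝ) (N : ℕ) :
    ∑ a ∈ Finset.range N, BP 3 (((a : ℝ) + x) / b)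
      = (1) * (PS 4 N x / b ^ 4) + (-2) * (PS 3 N x / b ^ 3) + (1) * (PS 2 N x / b ^ 2) + (-1/30) * (PS 0 N x / b ^ 0) := by
  induction N with
  | zero => simp [PS]
  | succ N ih =>
    rw [Finset.sum_range_succ, ih]
    simp only [BP, PS]
    push_cast
    ring

lemma bp_mult_3 (b : ℕ) (hb : 2 ≤ b) (x : ℝ) :
    (∑ a ∈ Finset.range b, BP 3 (((a : ℝ) + x) / b)) / b = (1 / (b : ℝ)) ^ 4 * BP 3 x := by
  have hb0 : (b : ℝ) ≠ 0 := by positivity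
  rw [bp_sum_3]
  simp only [BP, PS]
  push_cast
  field_simp
  ring

lemma bp_sum_4 (b : ℝ) (x : ℝ) (N : ℕ) :
    ∑ a ∈ Finset.range N, BP 4 (((a : ℝ) + x) / b)
      = (1) * (PS 5 N x / b ^ 5) + (-5/2) * (PS 4 N x / b ^ 4) + (5/3) * (PS 3 N x / b ^ 3) + (-1/6) * (PS 1 N x / b ^ 1) := by
  induction N with
  | zero => simp [PS]
  | succ N ih =>
    rw [Finset.sum_range_succ, ih]
    simp only [BP, PS]
    push_cast
    ring

lemma bp_mult_4 (b : ℕ) (hb : 2 ≤ b) (x : ℝ) :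
    (∑ a ∈ Finset.range b, BP 4 (((a : ℝ) + x) / b)) / b = (1 / (b : ℝ)) ^ 5 * BP 4 x := by
  have hb0 : (b : ℝ) ≠ 0 := by positivity
  rw [bp_sum_4]
  simp only [BP, PS]
  push_cast
  field_simp
  ring

lemma bp_sum_5 (b : ℝ) (x : ℝ) (N : ℕ) :
    ∑ a ∈ Finset.range N, BP 5 (((a : ℝ) + x) / b)
      = (1) * (PS 6 N x / b ^ 6) + (-3) * (PS 5 N x / b ^ 5) + (5/2) * (PS 4 N x / b ^ 4) + (-1/2) * (PS 2 N x / b ^ 2) + (1/42) * (PS 0 N x / b ^ 0) := by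
  induction N with
  | zero => simp [PS]
  | succ N ih =>
    rw [Finset.sum_range_succ, ih]
    simp only [BP, PS]
    push_cast
    ring

lemma bp_mult_5 (b : ℕ) (hb : 2 ≤ b) (x : ℝ) :
    (∑ a ∈ Finset.range b, BP 5 (((a : ℝ) + x) / b)) / b = (1 / (b : ℝ)) ^ 6 * BP 5 x := by
  have hb0 : (b : ℝ) ≠ 0 := by positivity
  rw [bp_sum_5]
  simp only [BP, PS]
  push_cast
  field_simp
  ring


lemma trf_BP (b d k : ℕ) (hdb : d < b) (x : ℝ)
    (h : (∑ a ∈ Finset.range b, BP k (((a : ℝ) + x) / b)) / b = (1 / (b : ℝ)) ^ (k + 1) * BP k x) :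
    trf b d (BP k) x = (1 / (b : ℝ)) ^ (k + 1) * BP k x - 1 / (b : ℝ) * BP k ((1 / (b : ℝ)) * (d + x)) := by
  unfold trf
  rw [sum_vOk b d hdb (fun a => BP k (((a : ℝ) + x) / b)), sub_div, h]
  have : ((d : ℝ) + x) / b = (1 / (b : ℝ)) * (d + x) := by ring
  rw [this]
  ring

lemma trf_continuous (b d : ℕ) (f : ℝ → ℝ) (hf : Continuous f) : Continuous (trf b d f) := by
  unfold trf
  fun_prop

lemma beta_eq_0 (b d : ℕ) (hb : 2 ≤ b) (hd : 1 ≤ d) (hdb : d < b) :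
    beta b d 0 = (1 / (b : ℝ)) ^ 1 * beta b d 0
      - 1 / (b : ℝ) * ((1) * (1 / (b : ℝ)) ^ 1 * Mom b d 1) := by
  have hb0 : (b : ℝ) ≠ 0 := by positivity
  have h1 := mu_self b d hb hd hdb (BP 0) (bddI_of_continuous _ (BP_continuous 0))
  have h2 := mu_exact b d hb hd hdb (trf b d (BP 0))
    (fun j => ([(1 / (b : ℝ)) ^ 1, 0, 0, 0, 0, 0, 0] : List ℝ).getD j 0)
    (fun j => ([-(1 / (b : ℝ)) * (-1/2 * (1 / (b : ℝ)) ^ 0), -(1 / (b : ℝ)) * (1 * (1 / (b : ℝ)) ^ 1), 0, 0, 0, 0, 0] : List ℝ).getD j 0) 7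
    (bddI_of_continuous _ (trf_continuous b d _ (BP_continuous 0)))
    (fun x => by
      rw [trf_BP b d 0 hdb x (bp_mult_0 b hb x)]
      simp [Finset.sum_range_succ, BP]
      ring)
  have h3 : mu b d (BP 0) = beta b d 0 := rfl
  rw [h2, h3] at h1
  simp [Finset.sum_range_succ, Mom_zero b d hb hd hdb, BP] at h1
  have hbi : (b : ℝ)⁻¹ * b = 1 := inv_mul_cancel₀ hb0
  linear_combination h1 - (-1/2) * hbi

lemma beta_eq_1 (b d : ℕ) (hb : 2 ≤ b) (hd : 1 ≤ d) (hdb : d < b) :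
    beta b d 1 = (1 / (b : ℝ)) ^ 2 * beta b d 1
      - 1 / (b : ℝ) * ((1) * (1 / (b : ℝ)) ^ 2 * Mom b d 2 + (-1) * (1 / (b : ℝ)) ^ 1 * Mom b d 1) := by
  have hb0 : (b : ℝ) ≠ 0 := by positivity
  have h1 := mu_self b d hb hd hdb (BP 1) (bddI_of_continuous _ (BP_continuous 1))
  have h2 := mu_exact b d hb hd hdb (trf b d (BP 1))
    (fun j => ([0, (1 / (b : ℝ)) ^ 2, 0, 0, 0, 0, 0] : List ℝ).getD j 0)
    (fun j => ([-(1 / (b : ℝ)) * (1/6 * (1 / (b : ℝ)) ^ 0), -(1 / (b : ℝ)) * (-1 * (1 / (b : ℝ)) ^ 1), -(1 / (b : ℝ)) * (1 * (1 / (b : ℝ)) ^ 2), 0, 0, 0, 0] : List ℝ).getD j 0) 7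
    (bddI_of_continuous _ (trf_continuous b d _ (BP_continuous 1)))
    (fun x => by
      rw [trf_BP b d 1 hdb x (bp_mult_1 b hb x)]
      simp [Finset.sum_range_succ, BP]
      ring)
  have h3 : mu b d (BP 1) = beta b d 1 := rfl
  rw [h2, h3] at h1
  simp [Finset.sum_range_succ, Mom_zero b d hb hd hdb, BP] at h1
  have hbi : (b : ℝ)⁻¹ * b = 1 := inv_mul_cancel₀ hb0
  linear_combination h1 - (1/6) * hbi

lemma beta_eq_2 (b d : ℕ) (hb : 2 ≤ b) (hd : 1 ≤ d) (hdb : d < b) :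
    beta b d 2 = (1 / (b : ℝ)) ^ 3 * beta b d 2
      - 1 / (b : ℝ) * ((1) * (1 / (b : ℝ)) ^ 3 * Mom b d 3 + (-3/2) * (1 / (b : ℝ)) ^ 2 * Mom b d 2 + (1/2) * (1 / (b : ℝ)) ^ 1 * Mom b d 1) := by
  have hb0 : (b : ℝ) ≠ 0 := by positivity
  have h1 := mu_self b d hb hd hdb (BP 2) (bddI_of_continuous _ (BP_continuous 2))
  have h2 := mu_exact b d hb hd hdb (trf b d (BP 2))
    (fun j => ([0, 0, (1 / (b : ℝ)) ^ 3, 0, 0, 0, 0] : List ℝ).getD j 0)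
    (fun j => ([0, -(1 / (b : ℝ)) * (1/2 * (1 / (b : ℝ)) ^ 1), -(1 / (b : ℝ)) * (-3/2 * (1 / (b : ℝ)) ^ 2), -(1 / (b : ℝ)) * (1 * (1 / (b : ℝ)) ^ 3), 0, 0, 0] : List ℝ).getD j 0) 7
    (bddI_of_continuous _ (trf_continuous b d _ (BP_continuous 2)))
    (fun x => by
      rw [trf_BP b d 2 hdb x (bp_mult_2 b hb x)]
      simp [Finset.sum_range_succ, BP]
      ring)
  have h3 : mu b d (BP 2) = beta b d 2 := rfl
  rw [h2, h3] at h1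
  simp [Finset.sum_range_succ, Mom_zero b d hb hd hdb, BP] at h1
  have hbi : (b : ℝ)⁻¹ * b = 1 := inv_mul_cancel₀ hb0
  linear_combination h1 - (0) * hbi

lemma beta_eq_3 (b d : ℕ) (hb : 2 ≤ b) (hd : 1 ≤ d) (hdb : d < b) :
    beta b d 3 = (1 / (b : ℝ)) ^ 4 * beta b d 3
      - 1 / (b : ℝ) * ((1) * (1 / (b : ℝ)) ^ 4 * Mom b d 4 + (-2) * (1 / (b : ℝ)) ^ 3 * Mom b d 3 + (1) * (1 / (b : ℝ)) ^ 2 * Mom b d 2) := by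
  have hb0 : (b : ℝ) ≠ 0 := by positivity
  have h1 := mu_self b d hb hd hdb (BP 3) (bddI_of_continuous _ (BP_continuous 3))
  have h2 := mu_exact b d hb hd hdb (trf b d (BP 3))
    (fun j => ([0, 0, 0, (1 / (b : ℝ)) ^ 4, 0, 0, 0] : List ℝ).getD j 0)
    (fun j => ([-(1 / (b : ℝ)) * (-1/30 * (1 / (b : ℝ)) ^ 0), 0, -(1 / (b : ℝ)) * (1 * (1 / (b : ℝ)) ^ 2), -(1 / (b : ℝ)) * (-2 * (1 / (b : ℝ)) ^ 3), -(1 / (b : ℝ)) * (1 * (1 / (b : ℝ)) ^ 4), 0, 0] : List ℝ).getD j 0) 7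
    (bddI_of_continuous _ (trf_continuous b d _ (BP_continuous 3)))
    (fun x => by
      rw [trf_BP b d 3 hdb x (bp_mult_3 b hb x)]
      simp [Finset.sum_range_succ, BP]
      ring)
  have h3 : mu b d (BP 3) = beta b d 3 := rfl
  rw [h2, h3] at h1
  simp [Finset.sum_range_succ, Mom_zero b d hb hd hdb, BP] at h1
  have hbi : (b : ℝ)⁻¹ * b = 1 := inv_mul_cancel₀ hb0
  linear_combination h1 - (-1/30) * hbi

lemma beta_eq_4 (b d : ℕ) (hb : 2 ≤ b) (hd : 1 ≤ d) (hdb : d < b) :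
    beta b d 4 = (1 / (b : ℝ)) ^ 5 * beta b d 4
      - 1 / (b : ℝ) * ((1) * (1 / (b : ℝ)) ^ 5 * Mom b d 5 + (-5/2) * (1 / (b : ℝ)) ^ 4 * Mom b d 4 + (5/3) * (1 / (b : ℝ)) ^ 3 * Mom b d 3 + (-1/6) * (1 / (b : ℝ)) ^ 1 * Mom b d 1) := by
  have hb0 : (b : ℝ) ≠ 0 := by positivity
  have h1 := mu_self b d hb hd hdb (BP 4) (bddI_of_continuous _ (BP_continuous 4))
  have h2 := mu_exact b d hb hd hdb (trf b d (BP 4))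
    (fun j => ([0, 0, 0, 0, (1 / (b : ℝ)) ^ 5, 0, 0] : List ℝ).getD j 0)
    (fun j => ([0, -(1 / (b : ℝ)) * (-1/6 * (1 / (b : ℝ)) ^ 1), 0, -(1 / (b : ℝ)) * (5/3 * (1 / (b : ℝ)) ^ 3), -(1 / (b : ℝ)) * (-5/2 * (1 / (b : ℝ)) ^ 4), -(1 / (b : ℝ)) * (1 * (1 / (b : ℝ)) ^ 5), 0] : List ℝ).getD j 0) 7
    (bddI_of_continuous _ (trf_continuous b d _ (BP_continuous 4)))
    (fun x => by
      rw [trf_BP b d 4 hdb x (bp_mult_4 b hb x)]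
      simp [Finset.sum_range_succ, BP]
      ring)
  have h3 : mu b d (BP 4) = beta b d 4 := rfl
  rw [h2, h3] at h1
  simp [Finset.sum_range_succ, Mom_zero b d hb hd hdb, BP] at h1
  have hbi : (b : ℝ)⁻¹ * b = 1 := inv_mul_cancel₀ hb0
  linear_combination h1 - (0) * hbi

lemma beta_eq_5 (b d : ℕ) (hb : 2 ≤ b) (hd : 1 ≤ d) (hdb : d < b) :
    beta b d 5 = (1 / (b : ℝ)) ^ 6 * beta b d 5
      - 1 / (b : ℝ) * ((1) * (1 / (b : ℝ)) ^ 6 * Mom b d 6 + (-3) * (1 / (b : ℝ)) ^ 5 * Mom b d 5 + (5/2) * (1 / (b : ℝ)) ^ 4 * Mom b d 4 + (-1/2) * (1 / (b : ℝ)) ^ 2 * Mom b d 2) := by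
  have hb0 : (b : ℝ) ≠ 0 := by positivity
  have h1 := mu_self b d hb hd hdb (BP 5) (bddI_of_continuous _ (BP_continuous 5))
  have h2 := mu_exact b d hb hd hdb (trf b d (BP 5))
    (fun j => ([0, 0, 0, 0, 0, (1 / (b : ℝ)) ^ 6, 0] : List ℝ).getD j 0)
    (fun j => ([-(1 / (b : ℝ)) * (1/42 * (1 / (b : ℝ)) ^ 0), 0, -(1 / (b : ℝ)) * (-1/2 * (1 / (b : ℝ)) ^ 2), 0, -(1 / (b : ℝ)) * (5/2 * (1 / (b : ℝ)) ^ 4), -(1 / (b : ℝ)) * (-3 * (1 / (b : ℝ)) ^ 5), -(1 / (b : ℝ)) * (1 * (1 / (b : ℝ)) ^ 6)] : List ℝ).getD j 0) 7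
    (bddI_of_continuous _ (trf_continuous b d _ (BP_continuous 5)))
    (fun x => by
      rw [trf_BP b d 5 hdb x (bp_mult_5 b hb x)]
      simp [Finset.sum_range_succ, BP]
      ring)
  have h3 : mu b d (BP 5) = beta b d 5 := rfl
  rw [h2, h3] at h1
  simp [Finset.sum_range_succ, Mom_zero b d hb hd hdb, BP] at h1
  have hbi : (b : ℝ)⁻¹ * b = 1 := inv_mul_cancel₀ hb0
  linear_combination h1 - (1/42) * hbi

lemma Mom_eq_1 (b d : ℕ) (hb : 2 ≤ b) (hd : 1 ≤ d) (hdb : d < b) :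
    Mom b d 1 = 1 / 2 * (((d : ℝ) + 1) ^ 2 - (d : ℝ) ^ 2) * b + 1 / 1 * (((d : ℝ) + 1) ^ 1 - (d : ℝ) ^ 1) * beta b d 0 := by
  have h2 := mu_exact b d hb hd hdb (fun x => ((d : ℝ) + x) ^ 1)
    (fun j => ([1 / 1 * (((d : ℝ) + 1) ^ 1 - (d : ℝ) ^ 1), 0, 0, 0, 0, 0] : List ℝ).getD j 0)
    (fun j => ([1 / 2 * (((d : ℝ) + 1) ^ 2 - (d : ℝ) ^ 2), 0, 0, 0, 0, 0] : List ℝ).getD j 0) 6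
    (bddI_of_continuous _ (by fun_prop))
    (fun x => by
      simp [Finset.sum_range_succ, BP]
      ring)
  have h3 : mu b d (fun x => ((d : ℝ) + x) ^ 1) = Mom b d 1 := rfl
  rw [h3] at h2
  rw [h2]
  simp [Finset.sum_range_succ, Mom_zero b d hb hd hdb]
  try ring

lemma Mom_eq_2 (b d : ℕ) (hb : 2 ≤ b) (hd : 1 ≤ d) (hdb : d < b) :
    Mom b d 2 = 1 / 3 * (((d : ℝ) + 1) ^ 3 - (d : ℝ) ^ 3) * b + 1 / 1 * (((d : ℝ) + 1) ^ 2 - (d : ℝ) ^ 2) * beta b d 0 + 1 / 1 * (((d : ℝ) + 1) ^ 1 - (d : ℝ) ^ 1) * beta b d 1 := by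
  have h2 := mu_exact b d hb hd hdb (fun x => ((d : ℝ) + x) ^ 2)
    (fun j => ([1 / 1 * (((d : ℝ) + 1) ^ 2 - (d : ℝ) ^ 2), 1 / 1 * (((d : ℝ) + 1) ^ 1 - (d : ℝ) ^ 1), 0, 0, 0, 0] : List ℝ).getD j 0)
    (fun j => ([1 / 3 * (((d : ℝ) + 1) ^ 3 - (d : ℝ) ^ 3), 0, 0, 0, 0, 0] : List ℝ).getD j 0) 6
    (bddI_of_continuous _ (by fun_prop))
    (fun x => by
      simp [Finset.sum_range_succ, BP]
      ring)
  have h3 : mu b d (fun x => ((d : ℝ) + x) ^ 2) = Mom b d 2 := rfl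
  rw [h3] at h2
  rw [h2]
  simp [Finset.sum_range_succ, Mom_zero b d hb hd hdb]
  try ring

lemma Mom_eq_3 (b d : ℕ) (hb : 2 ≤ b) (hd : 1 ≤ d) (hdb : d < b) :
    Mom b d 3 = 1 / 4 * (((d : ℝ) + 1) ^ 4 - (d : ℝ) ^ 4) * b + 1 / 1 * (((d : ℝ) + 1) ^ 3 - (d : ℝ) ^ 3) * beta b d 0 + 3 / 2 * (((d : ℝ) + 1) ^ 2 - (d : ℝ) ^ 2) * beta b d 1 + 1 / 1 * (((d : ℝ) + 1) ^ 1 - (d : ℝ) ^ 1) * beta b d 2 := by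
  have h2 := mu_exact b d hb hd hdb (fun x => ((d : ℝ) + x) ^ 3)
    (fun j => ([1 / 1 * (((d : ℝ) + 1) ^ 3 - (d : ℝ) ^ 3), 3 / 2 * (((d : ℝ) + 1) ^ 2 - (d : ℝ) ^ 2), 1 / 1 * (((d : ℝ) + 1) ^ 1 - (d : ℝ) ^ 1), 0, 0, 0] : List ℝ).getD j 0)
    (fun j => ([1 / 4 * (((d : ℝ) + 1) ^ 4 - (d : ℝ) ^ 4), 0, 0, 0, 0, 0] : List ℝ).getD j 0) 6
    (bddI_of_continuous _ (by fun_prop))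
    (fun x => by
      simp [Finset.sum_range_succ, BP]
      ring)
  have h3 : mu b d (fun x => ((d : ℝ) + x) ^ 3) = Mom b d 3 := rfl
  rw [h3] at h2
  rw [h2]
  simp [Finset.sum_range_succ, Mom_zero b d hb hd hdb]
  try ring

lemma Mom_eq_4 (b d : ℕ) (hb : 2 ≤ b) (hd : 1 ≤ d) (hdb : d < b) :
    Mom b d 4 = 1 / 5 * (((d : ℝ) + 1) ^ 5 - (d : ℝ) ^ 5) * b + 1 / 1 * (((d : ℝ) + 1) ^ 4 - (d : ℝ) ^ 4) * beta b d 0 + 2 / 1 * (((d : ℝ) + 1) ^ 3 - (d : ℝ) ^ 3) * beta b d 1 + 2 / 1 * (((d : ℝ) + 1) ^ 2 - (d : ℝ) ^ 2) * beta b d 2 + 1 / 1 * (((d : ℝ) + 1) ^ 1 - (d : ℝ) ^ 1) * beta b d 3 := by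
  have h2 := mu_exact b d hb hd hdb (fun x => ((d : ℝ) + x) ^ 4)
    (fun j => ([1 / 1 * (((d : ℝ) + 1) ^ 4 - (d : ℝ) ^ 4), 2 / 1 * (((d : ℝ) + 1) ^ 3 - (d : ℝ) ^ 3), 2 / 1 * (((d : ℝ) + 1) ^ 2 - (d : ℝ) ^ 2), 1 / 1 * (((d : ℝ) + 1) ^ 1 - (d : ℝ) ^ 1), 0, 0] : List ℝ).getD j 0)
    (fun j => ([1 / 5 * (((d : ℝ) + 1) ^ 5 - (d : ℝ) ^ 5), 0, 0, 0, 0, 0] : List ℝ).getD j 0) 6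
    (bddI_of_continuous _ (by fun_prop))
    (fun x => by
      simp [Finset.sum_range_succ, BP]
      ring)
  have h3 : mu b d (fun x => ((d : ℝ) + x) ^ 4) = Mom b d 4 := rfl
  rw [h3] at h2
  rw [h2]
  simp [Finset.sum_range_succ, Mom_zero b d hb hd hdb]
  try ring

lemma Mom_eq_5 (b d : ℕ) (hb : 2 ≤ b) (hd : 1 ≤ d) (hdb : d < b) :
    Mom b d 5 = 1 / 6 * (((d : ℝ) + 1) ^ 6 - (d : ℝ) ^ 6) * b + 1 / 1 * (((d : ℝ) + 1) ^ 5 - (d : ℝ) ^ 5) * beta b d 0 + 5 / 2 * (((d : ℝ) + 1) ^ 4 - (d : ℝ) ^ 4) * beta b d 1 + 10 / 3 * (((d : ℝ) + 1) ^ 3 - (d : ℝ) ^ 3) * beta b d 2 + 5 / 2 * (((d : ℝ) + 1) ^ 2 - (d : ℝ) ^ 2) * beta b d 3 + 1 / 1 * (((d : ℝ) + 1) ^ 1 - (d : ℝ) ^ 1) * beta b d 4 := by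
  have h2 := mu_exact b d hb hd hdb (fun x => ((d : ℝ) + x) ^ 5)
    (fun j => ([1 / 1 * (((d : ℝ) + 1) ^ 5 - (d : ℝ) ^ 5), 5 / 2 * (((d : ℝ) + 1) ^ 4 - (d : ℝ) ^ 4), 10 / 3 * (((d : ℝ) + 1) ^ 3 - (d : ℝ) ^ 3), 5 / 2 * (((d : ℝ) + 1) ^ 2 - (d : ℝ) ^ 2), 1 / 1 * (((d : ℝ) + 1) ^ 1 - (d : ℝ) ^ 1), 0] : List ℝ).getD j 0)
    (fun j => ([1 / 6 * (((d : ℝ) + 1) ^ 6 - (d : ℝ) ^ 6), 0, 0, 0, 0, 0] : List ℝ).getD j 0) 6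
    (bddI_of_continuous _ (by fun_prop))
    (fun x => by
      simp [Finset.sum_range_succ, BP]
      ring)
  have h3 : mu b d (fun x => ((d : ℝ) + x) ^ 5) = Mom b d 5 := rfl
  rw [h3] at h2
  rw [h2]
  simp [Finset.sum_range_succ, Mom_zero b d hb hd hdb]
  try ring

lemma Mom_bound (b d i : ℕ) (hb : 2 ≤ b) (hd : 1 ≤ d) (hdb : d < b) :
    |Mom b d i| ≤ ((d : ℝ) + 1) ^ i * b := by
  refine mu_bound b d hb hd hdb _ _ (fun x hx => ?_)
  have hx0 := hx.1
  have hx1 := hx.2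
  rw [abs_of_nonneg (by positivity)]
  exact pow_le_pow_left₀ (by positivity) (by linarith) i


/-- uniform boundedness in the base. -/
def Bd (d : ℕ) (F : ℕ → ℝ) : Prop := ∃ C : ℝ, ∀ b : ℕ, 2 ≤ b → d < b → |F b| ≤ C

lemma Bd.const (d : ℕ) (c : ℝ) : Bd d (fun _ => c) := ⟨|c|, fun _ _ _ => le_rfl⟩

lemma Bd.add {d : ℕ} {F G : ℕ → ℝ} (hF : Bd d F) (hG : Bd d G) : Bd d (fun b => F b + G b) := by
  obtain ⟨C, hC⟩ := hF
  obtain ⟨K, hK⟩ := hG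
  exact ⟨C + K, fun b h1 h2 => (abs_add_le _ _).trans (add_le_add (hC b h1 h2) (hK b h1 h2))⟩

lemma Bd.neg {d : ℕ} {F : ℕ → ℝ} (hF : Bd d F) : Bd d (fun b => -F b) := by
  obtain ⟨C, hC⟩ := hF
  exact ⟨C, fun b h1 h2 => by rw [abs_neg]; exact hC b h1 h2⟩

lemma Bd.sub {d : ℕ} {F G : ℕ → ℝ} (hF : Bd d F) (hG : Bd d G) : Bd d (fun b => F b - G b) := by
  simpa only [sub_eq_add_neg] using hF.add hG.neg

lemma Bd.mul {d : ℕ} {F G : ℕ → ℝ} (hF : Bd d F) (hG : Bd d G) : Bd d (fun b => F b * G b) := by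
  obtain ⟨C, hC⟩ := hF
  obtain ⟨K, hK⟩ := hG
  refine ⟨C * K, fun b h1 h2 => ?_⟩
  rw [abs_mul]
  exact mul_le_mul (hC b h1 h2) (hK b h1 h2) (abs_nonneg _) ((abs_nonneg _).trans (hC b h1 h2))

lemma Bd.pow {d : ℕ} {F : ℕ → ℝ} (hF : Bd d F) (n : ℕ) : Bd d (fun b => F b ^ n) := by
  obtain ⟨C, hC⟩ := hF
  refine ⟨C ^ n, fun b h1 h2 => ?_⟩
  rw [abs_pow]
  exact pow_le_pow_left₀ (abs_nonneg _) (hC b h1 h2) n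

lemma Bd.inv (d : ℕ) : Bd d (fun b => 1 / (b : ℝ)) := by
  refine ⟨1, fun b h1 _ => ?_⟩
  have : (2 : ℝ) ≤ b := by exact_mod_cast h1
  rw [abs_of_nonneg (by positivity), div_le_one (by linarith)]
  linarith

lemma Bd.scaled (d n : ℕ) (K : ℝ) (F : ℕ → ℝ) (h : ∀ b : ℕ, 1 ≤ b → |F b| ≤ K * (1 / (b : ℝ) ^ n)) :
    Bd d (fun b => (b : ℝ) ^ n * F b) := by
  refine ⟨K, fun b h1 _ => ?_⟩
  have hb : (0 : ℝ) < (b : ℝ) ^ n := by positivity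
  rw [abs_mul, abs_of_pos hb]
  calc (b : ℝ) ^ n * |F b| ≤ (b : ℝ) ^ n * (K * (1 / (b : ℝ) ^ n)) :=
        mul_le_mul_of_nonneg_left (h b (by omega)) hb.le
    _ = K := by field_simp

lemma Bd.fixed (d k : ℕ) (F G : ℕ → ℝ) (hG : Bd d G)
    (h : ∀ b : ℕ, 2 ≤ b → d < b → F b = (1 / (b : ℝ)) ^ (k + 1) * F b - G b) : Bd d F := by
  obtain ⟨C, hC⟩ := hG
  refine ⟨2 * C, fun b h1 h2 => ?_⟩
  have h3 := h b h1 h2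
  have h4 := hC b h1 h2
  have hb : (2 : ℝ) ≤ b := by exact_mod_cast h1
  have ht0 : 0 ≤ 1 / (b : ℝ) := by positivity
  have ht1 : 1 / (b : ℝ) ≤ 1 / 2 := one_div_le_one_div_of_le (by norm_num) hb
  have ht : (1 / (b : ℝ)) ^ (k + 1) ≤ 1 / 2 := by
    calc (1 / (b : ℝ)) ^ (k + 1) ≤ (1 / (b : ℝ)) ^ 1 :=
          pow_le_pow_of_le_one ht0 (by linarith) (by omega)
      _ ≤ 1 / 2 := by simpa using ht1
  have h5 : |F b| ≤ (1 / (b : ℝ)) ^ (k + 1) * |F b| + |G b| := by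
    calc |F b| = |(1 / (b : ℝ)) ^ (k + 1) * F b - G b| := by rw [← h3]
      _ ≤ |(1 / (b : ℝ)) ^ (k + 1) * F b| + |G b| := abs_sub _ _
      _ = _ := by rw [abs_mul, abs_of_nonneg (pow_nonneg ht0 _)]
  nlinarith [abs_nonneg (F b)]

lemma tail_cubic (s : ℕ) (hs : 4 ≤ s) (b : ℕ) (hb : 1 ≤ b) :
    |zetaR s - Sz s b| ≤ 8 * (1 / (b : ℝ) ^ 3) := by
  have := tail_bound s (by omega) (fun _ => 0) (fun m => 8 * (1 / (m : ℝ) ^ 3))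
    tendsto_const_nhds (fun m => by positivity) (fun m hm => by
      have hm0 : (1 : ℝ) ≤ m := by exact_mod_cast hm
      push_cast
      generalize (m : ℝ) = y at hm0
      have hy0 : 0 < y := by linarith
      rw [sub_zero, sub_zero, abs_of_nonneg (by positivity)]
      have h1 : 1 / y ^ s ≤ 1 / y ^ 4 :=
        one_div_le_one_div_of_le (by positivity) (pow_le_pow_right₀ hm0 hs)
      refine h1.trans ?_
      rw [← sub_nonneg]
      have e2 : 8 * (1 / y ^ 3) - 8 * (1 / (y + 1) ^ 3) - 1 / y ^ 4
          = (23 * y ^ 3 + 21 * y ^ 2 + 5 * y - 1) / (y ^ 4 * (y + 1) ^ 3) := by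
        field_simp
        ring
      rw [e2]
      apply div_nonneg _ (by positivity)
      nlinarith [pow_pos hy0 3, mul_pos hy0 hy0]) b hb
  simpa using this

/-- rescaled Bernoulli moments. -/
noncomputable def Wf (d k b : ℕ) : ℝ := (b : ℝ) * beta b d k

/-- rescaled power moments. -/
noncomputable def mf (d i b : ℕ) : ℝ := 1 / (b : ℝ) * Mom b d i

lemma mf_bd (d i : ℕ) (hd : 1 ≤ d) : Bd d (mf d i) := by
  refine ⟨((d : ℝ) + 1) ^ i, fun b h1 h2 => ?_⟩
  have hb : (0 : ℝ) < b := by positivity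
  have := Mom_bound b d i h1 hd h2
  unfold mf
  rw [abs_mul, abs_of_pos (by positivity), one_div_mul_eq_div, div_le_iff₀ hb]
  exact this

lemma W_eq_0 (b d : ℕ) (hb : 2 ≤ b) (hd : 1 ≤ d) (hdb : d < b) :
    Wf d 0 b = (1 / (b : ℝ)) ^ 1 * Wf d 0 b
      - ((1) * (1 / (b : ℝ)) ^ 0 * mf d 1 b) := by
  have h := beta_eq_0 b d hb hd hdb
  have hbt : (b : ℝ) * (1 / (b : ℝ)) = 1 := by field_simp
  unfold Wf mf
  generalize 1 / (b : ℝ) = t at *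
  linear_combination (b : ℝ) * h - ((1) * t ^ 1 * Mom b d 1) * hbt

lemma W_eq_1 (b d : ℕ) (hb : 2 ≤ b) (hd : 1 ≤ d) (hdb : d < b) :
    Wf d 1 b = (1 / (b : ℝ)) ^ 2 * Wf d 1 b
      - ((1) * (1 / (b : ℝ)) ^ 1 * mf d 2 b + (-1) * (1 / (b : ℝ)) ^ 0 * mf d 1 b) := by
  have h := beta_eq_1 b d hb hd hdb
  have hbt : (b : ℝ) * (1 / (b : ℝ)) = 1 := by field_simp
  unfold Wf mf
  generalize 1 / (b : ℝ) = t at *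
  linear_combination (b : ℝ) * h - ((1) * t ^ 2 * Mom b d 2 + (-1) * t ^ 1 * Mom b d 1) * hbt

lemma W_eq_2 (b d : ℕ) (hb : 2 ≤ b) (hd : 1 ≤ d) (hdb : d < b) :
    Wf d 2 b = (1 / (b : ℝ)) ^ 3 * Wf d 2 b
      - ((1) * (1 / (b : ℝ)) ^ 2 * mf d 3 b + (-3/2) * (1 / (b : ℝ)) ^ 1 * mf d 2 b + (1/2) * (1 / (b : ℝ)) ^ 0 * mf d 1 b) := by
  have h := beta_eq_2 b d hb hd hdb
  have hbt : (b : ℝ) * (1 / (b : ℝ)) = 1 := by field_simp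
  unfold Wf mf
  generalize 1 / (b : ℝ) = t at *
  linear_combination (b : ℝ) * h - ((1) * t ^ 3 * Mom b d 3 + (-3/2) * t ^ 2 * Mom b d 2 + (1/2) * t ^ 1 * Mom b d 1) * hbt

lemma W_eq_3 (b d : ℕ) (hb : 2 ≤ b) (hd : 1 ≤ d) (hdb : d < b) :
    Wf d 3 b = (1 / (b : ℝ)) ^ 4 * Wf d 3 b
      - ((1) * (1 / (b : ℝ)) ^ 3 * mf d 4 b + (-2) * (1 / (b : ℝ)) ^ 2 * mf d 3 b + (1) * (1 / (b : ℝ)) ^ 1 * mf d 2 b) := by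
  have h := beta_eq_3 b d hb hd hdb
  have hbt : (b : ℝ) * (1 / (b : ℝ)) = 1 := by field_simp
  unfold Wf mf
  generalize 1 / (b : ℝ) = t at *
  linear_combination (b : ℝ) * h - ((1) * t ^ 4 * Mom b d 4 + (-2) * t ^ 3 * Mom b d 3 + (1) * t ^ 2 * Mom b d 2) * hbt

lemma W_eq_4 (b d : ℕ) (hb : 2 ≤ b) (hd : 1 ≤ d) (hdb : d < b) :
    Wf d 4 b = (1 / (b : ℝ)) ^ 5 * Wf d 4 b
      - ((1) * (1 / (b : ℝ)) ^ 4 * mf d 5 b + (-5/2) * (1 / (b : ℝ)) ^ 3 * mf d 4 b + (5/3) * (1 / (b : ℝ)) ^ 2 * mf d 3 b + (-1/6) * (1 / (b : ℝ)) ^ 0 * mf d 1 b) := by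
  have h := beta_eq_4 b d hb hd hdb
  have hbt : (b : ℝ) * (1 / (b : ℝ)) = 1 := by field_simp
  unfold Wf mf
  generalize 1 / (b : ℝ) = t at *
  linear_combination (b : ℝ) * h - ((1) * t ^ 5 * Mom b d 5 + (-5/2) * t ^ 4 * Mom b d 4 + (5/3) * t ^ 3 * Mom b d 3 + (-1/6) * t ^ 1 * Mom b d 1) * hbt

lemma W_eq_5 (b d : ℕ) (hb : 2 ≤ b) (hd : 1 ≤ d) (hdb : d < b) :
    Wf d 5 b = (1 / (b : ℝ)) ^ 6 * Wf d 5 b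
      - ((1) * (1 / (b : ℝ)) ^ 5 * mf d 6 b + (-3) * (1 / (b : ℝ)) ^ 4 * mf d 5 b + (5/2) * (1 / (b : ℝ)) ^ 3 * mf d 4 b + (-1/2) * (1 / (b : ℝ)) ^ 1 * mf d 2 b) := by
  have h := beta_eq_5 b d hb hd hdb
  have hbt : (b : ℝ) * (1 / (b : ℝ)) = 1 := by field_simp
  unfold Wf mf
  generalize 1 / (b : ℝ) = t at *
  linear_combination (b : ℝ) * h - ((1) * t ^ 6 * Mom b d 6 + (-3) * t ^ 5 * Mom b d 5 + (5/2) * t ^ 4 * Mom b d 4 + (-1/2) * t ^ 2 * Mom b d 2) * hbt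

lemma mf_eq_1 (b d : ℕ) (hb : 2 ≤ b) (hd : 1 ≤ d) (hdb : d < b) :
    mf d 1 b = 1 / 2 * (((d : ℝ) + 1) ^ 2 - (d : ℝ) ^ 2) + (1 / (b : ℝ)) ^ 2 * (1 / 1 * (((d : ℝ) + 1) ^ 1 - (d : ℝ) ^ 1) * Wf d 0 b) := by
  have h := Mom_eq_1 b d hb hd hdb
  have hbt : (b : ℝ) * (1 / (b : ℝ)) = 1 := by field_simp
  unfold Wf mf
  generalize 1 / (b : ℝ) = t at *
  linear_combination t * h + (1 / 2 * (((d : ℝ) + 1) ^ 2 - (d : ℝ) ^ 2) - (1 / 1 * (((d : ℝ) + 1) ^ 1 - (d : ℝ) ^ 1) * t * beta b d 0)) * hbt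

lemma mf_eq_2 (b d : ℕ) (hb : 2 ≤ b) (hd : 1 ≤ d) (hdb : d < b) :
    mf d 2 b = 1 / 3 * (((d : ℝ) + 1) ^ 3 - (d : ℝ) ^ 3) + (1 / (b : ℝ)) ^ 2 * (1 / 1 * (((d : ℝ) + 1) ^ 2 - (d : ℝ) ^ 2) * Wf d 0 b + 1 / 1 * (((d : ℝ) + 1) ^ 1 - (d : ℝ) ^ 1) * Wf d 1 b) := by
  have h := Mom_eq_2 b d hb hd hdb
  have hbt : (b : ℝ) * (1 / (b : ℝ)) = 1 := by field_simp
  unfold Wf mf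
  generalize 1 / (b : ℝ) = t at *
  linear_combination t * h + (1 / 3 * (((d : ℝ) + 1) ^ 3 - (d : ℝ) ^ 3) - (1 / 1 * (((d : ℝ) + 1) ^ 2 - (d : ℝ) ^ 2) * t * beta b d 0 + 1 / 1 * (((d : ℝ) + 1) ^ 1 - (d : ℝ) ^ 1) * t * beta b d 1)) * hbt

lemma mf_eq_3 (b d : ℕ) (hb : 2 ≤ b) (hd : 1 ≤ d) (hdb : d < b) :
    mf d 3 b = 1 / 4 * (((d : ℝ) + 1) ^ 4 - (d : ℝ) ^ 4) + (1 / (b : ℝ)) ^ 2 * (1 / 1 * (((d : ℝ) + 1) ^ 3 - (d : ℝ) ^ 3) * Wf d 0 b + 3 / 2 * (((d : ℝ) + 1) ^ 2 - (d : ℝ) ^ 2) * Wf d 1 b + 1 / 1 * (((d : ℝ) + 1) ^ 1 - (d : ℝ) ^ 1) * Wf d 2 b) := by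
  have h := Mom_eq_3 b d hb hd hdb
  have hbt : (b : ℝ) * (1 / (b : ℝ)) = 1 := by field_simp
  unfold Wf mf
  generalize 1 / (b : ℝ) = t at *
  linear_combination t * h + (1 / 4 * (((d : ℝ) + 1) ^ 4 - (d : ℝ) ^ 4) - (1 / 1 * (((d : ℝ) + 1) ^ 3 - (d : ℝ) ^ 3) * t * beta b d 0 + 3 / 2 * (((d : ℝ) + 1) ^ 2 - (d : ℝ) ^ 2) * t * beta b d 1 + 1 / 1 * (((d : ℝ) + 1) ^ 1 - (d : ℝ) ^ 1) * t * beta b d 2)) * hbt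

lemma mf_eq_4 (b d : ℕ) (hb : 2 ≤ b) (hd : 1 ≤ d) (hdb : d < b) :
    mf d 4 b = 1 / 5 * (((d : ℝ) + 1) ^ 5 - (d : ℝ) ^ 5) + (1 / (b : ℝ)) ^ 2 * (1 / 1 * (((d : ℝ) + 1) ^ 4 - (d : ℝ) ^ 4) * Wf d 0 b + 2 / 1 * (((d : ℝ) + 1) ^ 3 - (d : ℝ) ^ 3) * Wf d 1 b + 2 / 1 * (((d : ℝ) + 1) ^ 2 - (d : ℝ) ^ 2) * Wf d 2 b + 1 / 1 * (((d : ℝ) + 1) ^ 1 - (d : ℝ) ^ 1) * Wf d 3 b) := by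
  have h := Mom_eq_4 b d hb hd hdb
  have hbt : (b : ℝ) * (1 / (b : ℝ)) = 1 := by field_simp
  unfold Wf mf
  generalize 1 / (b : ℝ) = t at *
  linear_combination t * h + (1 / 5 * (((d : ℝ) + 1) ^ 5 - (d : ℝ) ^ 5) - (1 / 1 * (((d : ℝ) + 1) ^ 4 - (d : ℝ) ^ 4) * t * beta b d 0 + 2 / 1 * (((d : ℝ) + 1) ^ 3 - (d : ℝ) ^ 3) * t * beta b d 1 + 2 / 1 * (((d : ℝ) + 1) ^ 2 - (d : ℝ) ^ 2) * t * beta b d 2 + 1 / 1 * (((d : ℝ) + 1) ^ 1 - (d : ℝ) ^ 1) * t * beta b d 3)) * hbt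

lemma mf_eq_5 (b d : ℕ) (hb : 2 ≤ b) (hd : 1 ≤ d) (hdb : d < b) :
    mf d 5 b = 1 / 6 * (((d : ℝ) + 1) ^ 6 - (d : ℝ) ^ 6) + (1 / (b : ℝ)) ^ 2 * (1 / 1 * (((d : ℝ) + 1) ^ 5 - (d : ℝ) ^ 5) * Wf d 0 b + 5 / 2 * (((d : ℝ) + 1) ^ 4 - (d : ℝ) ^ 4) * Wf d 1 b + 10 / 3 * (((d : ℝ) + 1) ^ 3 - (d : ℝ) ^ 3) * Wf d 2 b + 5 / 2 * (((d : ℝ) + 1) ^ 2 - (d : ℝ) ^ 2) * Wf d 3 b + 1 / 1 * (((d : ℝ) + 1) ^ 1 - (d : ℝ) ^ 1) * Wf d 4 b) := by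
  have h := Mom_eq_5 b d hb hd hdb
  have hbt : (b : ℝ) * (1 / (b : ℝ)) = 1 := by field_simp
  unfold Wf mf
  generalize 1 / (b : ℝ) = t at *
  linear_combination t * h + (1 / 6 * (((d : ℝ) + 1) ^ 6 - (d : ℝ) ^ 6) - (1 / 1 * (((d : ℝ) + 1) ^ 5 - (d : ℝ) ^ 5) * t * beta b d 0 + 5 / 2 * (((d : ℝ) + 1) ^ 4 - (d : ℝ) ^ 4) * t * beta b d 1 + 10 / 3 * (((d : ℝ) + 1) ^ 3 - (d : ℝ) ^ 3) * t * beta b d 2 + 5 / 2 * (((d : ℝ) + 1) ^ 2 - (d : ℝ) ^ 2) * t * beta b d 3 + 1 / 1 * (((d : ℝ) + 1) ^ 1 - (d : ℝ) ^ 1) * t * beta b d 4)) * hbt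

lemma W_bd (d k : ℕ) (hd : 1 ≤ d) (hk : k < 6) : Bd d (Wf d k) := by
  have m1 := mf_bd d 1 hd
  have m2 := mf_bd d 2 hd
  have m3 := mf_bd d 3 hd
  have m4 := mf_bd d 4 hd
  have m5 := mf_bd d 5 hd
  have m6 := mf_bd d 6 hd
  interval_cases k
  · refine Bd.fixed d 0 _ _ ?_ (fun b h1 h2 => W_eq_0 b d h1 hd h2)
    repeat' first | exact Bd.const d _ | exact Bd.inv d | assumption | apply Bd.sub | apply Bd.add | apply Bd.mul | apply Bd.neg | apply Bd.pow
  · refine Bd.fixed d 1 _ _ ?_ (fun b h1 h2 => W_eq_1 b d h1 hd h2)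
    repeat' first | exact Bd.const d _ | exact Bd.inv d | assumption | apply Bd.sub | apply Bd.add | apply Bd.mul | apply Bd.neg | apply Bd.pow
  · refine Bd.fixed d 2 _ _ ?_ (fun b h1 h2 => W_eq_2 b d h1 hd h2)
    repeat' first | exact Bd.const d _ | exact Bd.inv d | assumption | apply Bd.sub | apply Bd.add | apply Bd.mul | apply Bd.neg | apply Bd.pow
  · refine Bd.fixed d 3 _ _ ?_ (fun b h1 h2 => W_eq_3 b d h1 hd h2)
    repeat' first | exact Bd.const d _ | exact Bd.inv d | assumption | apply Bd.sub | apply Bd.add | apply Bd.mul | apply Bd.neg | apply Bd.pow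
  · refine Bd.fixed d 4 _ _ ?_ (fun b h1 h2 => W_eq_4 b d h1 hd h2)
    repeat' first | exact Bd.const d _ | exact Bd.inv d | assumption | apply Bd.sub | apply Bd.add | apply Bd.mul | apply Bd.neg | apply Bd.pow
  · refine Bd.fixed d 5 _ _ ?_ (fun b h1 h2 => W_eq_5 b d h1 hd h2)
    repeat' first | exact Bd.const d _ | exact Bd.inv d | assumption | apply Bd.sub | apply Bd.add | apply Bd.mul | apply Bd.neg | apply Bd.pow

lemma W_exp_1 (d : ℕ) (hd : 1 ≤ d) : ∃ R1 : ℕ → ℝ, Bd d R1 ∧ ∀ b : ℕ, 2 ≤ b → d < b →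
    Wf d 0 b = -((d : ℝ)+1/2)*(1+(1 / (b : ℝ))-(1 / (b : ℝ))^3) + (1 / (b : ℝ))^4*R1 b := by
  have w1 := W_bd d 0 hd (by norm_num)
  have w2 := W_bd d 1 hd (by norm_num)
  have w3 := W_bd d 2 hd (by norm_num)
  have w4 := W_bd d 3 hd (by norm_num)
  have m2 := mf_bd d 2 hd
  have m3 := mf_bd d 3 hd
  have m4 := mf_bd d 4 hd
  refine ⟨fun b => (1) + (1)*Wf d 0 b + (-4)*Wf d 0 b*(1 / (b : ℝ)) + (6)*Wf d 0 b*(1 / (b : ℝ))^2 +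
    (-4)*Wf d 0 b*(1 / (b : ℝ))^3 + (1)*Wf d 0 b*(1 / (b : ℝ))^4 + (2)*(d : ℝ) +
    (-3)*(d : ℝ)*(1 / (b : ℝ)) + (1)*(d : ℝ)*(1 / (b : ℝ))^2 + (-3/2)*(1 / (b : ℝ)) +
    (1/2)*(1 / (b : ℝ))^2, ?_, fun b hb hdb => ?_⟩
  · repeat' first | exact Bd.const d _ | exact Bd.inv d | assumption | apply Bd.sub | apply Bd.add | apply Bd.mul | apply Bd.neg | apply Bd.pow
  · have e1 := W_eq_0 b d hb hd hdb
    have e2 := W_eq_1 b d hb hd hdb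
    have e3 := W_eq_2 b d hb hd hdb
    have e4 := W_eq_3 b d hb hd hdb
    have k1 := mf_eq_1 b d hb hd hdb
    have k2 := mf_eq_2 b d hb hd hdb
    beta_reduce
    generalize 1 / (b : ℝ) = t at *
    linear_combination (1 + (t - t^2) + (t-t^2)^2 + (t-t^2)^3) * (e1 - k1)

lemma W_exp_2 (d : ℕ) (hd : 1 ≤ d) : ∃ R2 : ℕ → ℝ, Bd d R2 ∧ ∀ b : ℕ, 2 ≤ b → d < b →
    Wf d 1 b = ((d : ℝ)+1/2) - (1 / (b : ℝ))*((d : ℝ)^2+(d : ℝ)+1/3) + (1 / (b : ℝ))^3*R2 b := by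
  have w1 := W_bd d 0 hd (by norm_num)
  have w2 := W_bd d 1 hd (by norm_num)
  have w3 := W_bd d 2 hd (by norm_num)
  have w4 := W_bd d 3 hd (by norm_num)
  have m2 := mf_bd d 2 hd
  have m3 := mf_bd d 3 hd
  have m4 := mf_bd d 4 hd
  refine ⟨fun b => (1 - (1 / (b : ℝ))) * Wf d 0 b + (-((d : ℝ)^2+(d : ℝ)+1/3) + (1 / (b : ℝ)) * (Wf d 0 b +
    Wf d 1 b) - (1 / (b : ℝ)) ^ 2 * (2 / 2 * (((d : ℝ) + 1) ^ 2 - (d : ℝ) ^ 2) * Wf d 0 b +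
    1 / 1 * (((d : ℝ) + 1) ^ 1 - (d : ℝ) ^ 1) * Wf d 1 b)) - (2 / 2 * (((d : ℝ) +
    1) ^ 2 - (d : ℝ) ^ 2) * Wf d 0 b + 1 / 1 * (((d : ℝ) + 1) ^ 1 - (d : ℝ) ^ 1) * Wf d 1 b), ?_, fun b hb hdb => ?_⟩
  · repeat' first | exact Bd.const d _ | exact Bd.inv d | assumption | apply Bd.sub | apply Bd.add | apply Bd.mul | apply Bd.neg | apply Bd.pow
  · have e1 := W_eq_0 b d hb hd hdb
    have e2 := W_eq_1 b d hb hd hdb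
    have e3 := W_eq_2 b d hb hd hdb
    have e4 := W_eq_3 b d hb hd hdb
    have k1 := mf_eq_1 b d hb hd hdb
    have k2 := mf_eq_2 b d hb hd hdb
    beta_reduce
    generalize 1 / (b : ℝ) = t at *
    linear_combination (e2 + k1 - t * k2) + t^2 * (e1 - k1) + t^2 * (e2 + k1 - t * k2)

lemma W_exp_3 (d : ℕ) (hd : 1 ≤ d) : ∃ R3 : ℕ → ℝ, Bd d R3 ∧ ∀ b : ℕ, 2 ≤ b → d < b →
    Wf d 2 b = -((d : ℝ)+1/2)/2 + 3/2*(1 / (b : ℝ))*((d : ℝ)^2+(d : ℝ)+1/3) + (1 / (b : ℝ))^2*R3 b := by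
  have w1 := W_bd d 0 hd (by norm_num)
  have w2 := W_bd d 1 hd (by norm_num)
  have w3 := W_bd d 2 hd (by norm_num)
  have w4 := W_bd d 3 hd (by norm_num)
  have m2 := mf_bd d 2 hd
  have m3 := mf_bd d 3 hd
  have m4 := mf_bd d 4 hd
  refine ⟨fun b => (1 / (b : ℝ)) * Wf d 2 b - 1/2 * Wf d 0 b + 3 / 2 * (1 / (b : ℝ)) * (2 / 2 * (((d : ℝ) +
    1) ^ 2 - (d : ℝ) ^ 2) * Wf d 0 b + 1 / 1 * (((d : ℝ) +
    1) ^ 1 - (d : ℝ) ^ 1) * Wf d 1 b) - mf d 3 b, ?_, fun b hb hdb => ?_⟩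
  · repeat' first | exact Bd.const d _ | exact Bd.inv d | assumption | apply Bd.sub | apply Bd.add | apply Bd.mul | apply Bd.neg | apply Bd.pow
  · have e1 := W_eq_0 b d hb hd hdb
    have e2 := W_eq_1 b d hb hd hdb
    have e3 := W_eq_2 b d hb hd hdb
    have e4 := W_eq_3 b d hb hd hdb
    have k1 := mf_eq_1 b d hb hd hdb
    have k2 := mf_eq_2 b d hb hd hdb
    beta_reduce
    generalize 1 / (b : ℝ) = t at *
    linear_combination e3 - 1/2 * k1 + 3/2 * t * k2

lemma W_exp_4 (d : ℕ) (hd : 1 ≤ d) : ∃ R4 : ℕ → ℝ, Bd d R4 ∧ ∀ b : ℕ, 2 ≤ b → d < b →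
    Wf d 3 b = (1 / (b : ℝ))*R4 b := by
  have w1 := W_bd d 0 hd (by norm_num)
  have w2 := W_bd d 1 hd (by norm_num)
  have w3 := W_bd d 2 hd (by norm_num)
  have w4 := W_bd d 3 hd (by norm_num)
  have m2 := mf_bd d 2 hd
  have m3 := mf_bd d 3 hd
  have m4 := mf_bd d 4 hd
  refine ⟨fun b => (1 / (b : ℝ)) ^ 3 * Wf d 3 b - mf d 2 b +
    2 * (1 / (b : ℝ)) * mf d 3 b - (1 / (b : ℝ)) ^ 2 * mf d 4 b, ?_, fun b hb hdb => ?_⟩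
  · repeat' first | exact Bd.const d _ | exact Bd.inv d | assumption | apply Bd.sub | apply Bd.add | apply Bd.mul | apply Bd.neg | apply Bd.pow
  · have e1 := W_eq_0 b d hb hd hdb
    have e2 := W_eq_1 b d hb hd hdb
    have e3 := W_eq_2 b d hb hd hdb
    have e4 := W_eq_3 b d hb hd hdb
    have k1 := mf_eq_1 b d hb hd hdb
    have k2 := mf_eq_2 b d hb hd hdb
    beta_reduce
    generalize 1 / (b : ℝ) = t at *
    linear_combination e4


lemma S2_form (b : ℕ) (hb : (0 : ℝ) < b) : Sz 2 b = zetaR 2 - (1 / 2 * (1 / (b : ℝ)) ^ 2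
    + 1 / (b : ℝ) + 1 / 6 * (1 / (b : ℝ)) ^ 3 + (1 / (b : ℝ)) ^ 5 * ((b : ℝ) ^ 5 * (zetaR 2 - Sz 2 b
      - (1 / (b : ℝ) + 1 / 2 * (1 / (b : ℝ) ^ 2) + 1 / 6 * (1 / (b : ℝ) ^ 3))))) := by
  field_simp
  ring

lemma S3_form (b : ℕ) (hb : (0 : ℝ) < b) : Sz 3 b = zetaR 3 - (1 / 2 * (1 / (b : ℝ)) ^ 2
    + 1 / 2 * (1 / (b : ℝ)) ^ 3 + (1 / (b : ℝ)) ^ 4 * ((b : ℝ) ^ 4 * (zetaR 3 - Sz 3 b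
      - (1 / 2 * (1 / (b : ℝ) ^ 2) + 1 / 2 * (1 / (b : ℝ) ^ 3))))) := by
  field_simp
  ring

lemma S_form (s b : ℕ) (hb : (0 : ℝ) < b) :
    Sz s b = zetaR s - (1 / (b : ℝ)) ^ 3 * ((b : ℝ) ^ 3 * (zetaR s - Sz s b)) := by
  field_simp
  ring

/-- coefficient of `t ^ 0` in the remainder polynomial. -/
noncomputable def remC0 (d e f R1 R2 R3 R4 W5 W6 s2 s3 s4 s5 s6 z2 z3 z4 z5 z6 : ℝ) : ℝ :=
    (1) + (-1)*R1 + (1)*R1*e + (-1)*R1*f + (1/2)*R2 + (-1/2)*R2*e^2 + (1/2)*R2*f^2 + (-1/3)*R3 +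
    (1/3)*R3*e^3 + (-1/3)*R3*f^3 + (1/4)*R4 + (-1/4)*R4*e^4 + (1/4)*R4*f^4 + (-1/5)*W5 +
    (1/5)*W5*e^5 + (-1/5)*W5*f^5 + (5/3)*d + (-1)*d*e^2 + (7/2)*d*e^4 + (-1)*d*s2 + (1)*d*s3 +
    (-1)*d*s4 + (1)*d*z2 + (-7/2)*d*z4 + (-1/2)*d^2 + (15/2)*d^2*e^4 + (1)*d^2*s3 + (-3/2)*d^2*s4 +
    (-15/2)*d^2*z4 + (6)*d^3*e^4 + (-2)*d^3*e^5 + (-1)*d^3*s4 + (-6)*d^3*z4 + (2)*d^3*z5 +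
    (-4)*d^4*e^5 + (4)*d^4*z5 + (-1/2)*e^2 + (1/2)*e^4 + (-1/2)*s2 + (1/3)*s3 + (-1/4)*s4 +
    (1/2)*z2 + (-1/2)*z4

/-- coefficient of `t ^ 1` in the remainder polynomial. -/
noncomputable def remC1 (d e f R1 R2 R3 R4 W5 W6 s2 s3 s4 s5 s6 z2 z3 z4 z5 z6 : ℝ) : ℝ :=
    (-11/12) + (1)*R1 + (-1)*R1*e^2 + (1)*R1*z2 + (1)*R2*e^3 + (-1)*R2*z3 + (-1)*R3*e^4 + (1)*R3*z4 +
    (1)*R4*e^5 + (-1)*R4*z5 + (-1)*W5*e^6 + (1)*W5*z6 + (1/6)*W6 + (-1/6)*W6*e^6 + (1/6)*W6*f^6 +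
    (-3)*d + (2)*d*e^3 + (-2)*d*e^5 + (1/6)*d*e^6 + (1)*d*s5 + (-2)*d*z3 + (2)*d*z5 + (-1/6)*d*z6 +
    (-5/2)*d^2 + (2)*d^2*e^3 + (-8)*d^2*e^5 + (2)*d^2*s5 + (-2)*d^2*z3 + (8)*d^2*z5 + (-14)*d^3*e^5 +
    (2)*d^3*s5 + (14)*d^3*z5 + (-10)*d^4*e^5 + (5/2)*d^4*e^6 + (1)*d^4*s5 + (10)*d^4*z5 +
    (-5/2)*d^4*z6 + (5)*d^5*e^6 + (-5)*d^5*z6 + (1/2)*e^3 + (-1/6)*e^5 + (1/12)*e^6 + (1/5)*s5 +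
    (-1/2)*z3 + (1/6)*z5 + (-1/12)*z6

/-- coefficient of `t ^ 2` in the remainder polynomial. -/
noncomputable def remC2 (d e f R1 R2 R3 R4 W5 W6 s2 s3 s4 s5 s6 z2 z3 z4 z5 z6 : ℝ) : ℝ :=
    (-1/2) + (-1)*R1 + (2)*R1*d*e^3 + (-2)*R1*d*z3 + (1)*R1*e^3 + (-1)*R1*z3 + (-1/2)*R2 +
    (-3)*R2*d*e^4 + (3)*R2*d*z4 + (-3/2)*R2*e^4 + (3/2)*R2*z4 + (4)*R3*d*e^5 + (-4)*R3*d*z5 +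
    (2)*R3*e^5 + (-2)*R3*z5 + (-5)*R4*d*e^6 + (5)*R4*d*z6 + (-5/2)*R4*e^6 + (5/2)*R4*z6 + (-3/2)*d +
    (-5/2)*d*e^4 + (-2/3)*d*e^6 + (1)*d*s2 + (-1)*d*s3 + (-1)*d*s6 + (5/2)*d*z4 + (2/3)*d*z6 +
    (-1)*d^2 + (-9/2)*d^2*e^4 + (5/2)*d^2*e^6 + (-2)*d^2*s3 + (3/2)*d^2*s4 + (-5/2)*d^2*s6 +
    (9/2)*d^2*z4 + (-5/2)*d^2*z6 + (-3)*d^3*e^4 + (40/3)*d^3*e^6 + (3)*d^3*s4 + (-10/3)*d^3*s6 +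
    (3)*d^3*z4 + (-40/3)*d^3*z6 + (45/2)*d^4*e^6 + (-5/2)*d^4*s6 + (-45/2)*d^4*z6 + (15)*d^5*e^6 +
    (-1)*d^5*s6 + (-15)*d^5*z6 + (-1/2)*e^4 + (-1/3)*e^6 + (1/2)*s2 + (-1/6)*s6 + (1/2)*z4 +
    (1/3)*z6

/-- coefficient of `t ^ 3` in the remainder polynomial. -/
noncomputable def remC3 (d e f R1 R2 R3 R4 W5 W6 s2 s3 s4 s5 s6 z2 z3 z4 z5 z6 : ℝ) : ℝ :=
    (1/6) + (-1/2)*R1 + (-3)*R1*d*e^4 + (3)*R1*d*z4 + (-3)*R1*d^2*e^4 + (3)*R1*d^2*z4 + (-1)*R1*e^4 +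
    (1)*R1*z4 + (1/2)*R2 + (6)*R2*d*e^5 + (-6)*R2*d*z5 + (6)*R2*d^2*e^5 + (-6)*R2*d^2*z5 +
    (2)*R2*e^5 + (-2)*R2*z5 + (1/3)*R3 + (-10)*R3*d*e^6 + (10)*R3*d*z6 + (-10)*R3*d^2*e^6 +
    (10)*R3*d^2*z6 + (-10/3)*R3*e^6 + (10/3)*R3*z6 + (5/6)*d + (3)*d*e^5 + (1)*d*s2 + (-3)*d*s3 +
    (7/2)*d*s4 + (-3)*d*z5 + (1)*d^2 + (7)*d^2*e^5 + (-3)*d^2*s3 + (15/2)*d^2*s4 + (-7)*d^2*z5 +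
    (8)*d^3*e^5 + (6)*d^3*s4 + (-2)*d^3*s5 + (-8)*d^3*z5 + (4)*d^4*e^5 + (-4)*d^4*s5 + (-4)*d^4*z5 +
    (1/2)*e^5 + (1/2)*s2 + (-5/6)*s3 + (1/2)*s4 + (-1/2)*z5

/-- coefficient of `t ^ 4` in the remainder polynomial. -/
noncomputable def remC4 (d e f R1 R2 R3 R4 W5 W6 s2 s3 s4 s5 s6 z2 z3 z4 z5 z6 : ℝ) : ℝ :=
    (1/4) + (1/3)*R1 + (1)*R1*d + (4)*R1*d*e^5 + (-4)*R1*d*z5 + (6)*R1*d^2*e^5 + (-6)*R1*d^2*z5 +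
    (4)*R1*d^3*e^5 + (-4)*R1*d^3*z5 + (1)*R1*e^5 + (-1)*R1*z5 + (1/2)*R2 + (-10)*R2*d*e^6 +
    (10)*R2*d*z6 + (-15)*R2*d^2*e^6 + (15)*R2*d^2*z6 + (-10)*R2*d^3*e^6 + (10)*R2*d^3*z6 +
    (-5/2)*R2*e^6 + (5/2)*R2*z6 + (-1)*R3*s4 + (-1/4)*R4 + (1)*R4*s5 + (-1)*W5*s6 + (1)*d +
    (-7/2)*d*e^6 + (-2)*d*s5 + (1/6)*d*s6 + (7/2)*d*z6 + (1)*d^2 + (-10)*d^2*e^6 + (-8)*d^2*s5 +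
    (10)*d^2*z6 + (-15)*d^3*e^6 + (-14)*d^3*s5 + (15)*d^3*z6 + (-25/2)*d^4*e^6 + (-10)*d^4*s5 +
    (5/2)*d^4*s6 + (25/2)*d^4*z6 + (-5)*d^5*e^6 + (5)*d^5*s6 + (5)*d^5*z6 + (-1/2)*e^6 + (-1/6)*s5 +
    (1/12)*s6 + (1/2)*z6

/-- coefficient of `t ^ 5` in the remainder polynomial. -/
noncomputable def remC5 (d e f R1 R2 R3 R4 W5 W6 s2 s3 s4 s5 s6 z2 z3 z4 z5 z6 : ℝ) : ℝ :=
    (1/2)*R1 + (1)*R1*d + (-5)*R1*d*e^6 + (5)*R1*d*z6 + (-10)*R1*d^2*e^6 + (10)*R1*d^2*z6 +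
    (-10)*R1*d^3*e^6 + (10)*R1*d^3*z6 + (-5)*R1*d^4*e^6 + (5)*R1*d^4*z6 + (-1)*R1*e^6 + (1)*R1*z6 +
    (-3)*R2*d*s4 + (1)*R2*s3 + (-3/2)*R2*s4 + (4)*R3*d*s5 + (2)*R3*s5 + (-5)*R4*d*s6 + (-5/2)*R4*s6 +
    (1/5)*W5 + (-1)*d*s2 + (2)*d*s3 + (-5/2)*d*s4 + (-2/3)*d*s6 + (2)*d^2*s3 + (-9/2)*d^2*s4 +
    (5/2)*d^2*s6 + (-3)*d^3*s4 + (40/3)*d^3*s6 + (45/2)*d^4*s6 + (15)*d^5*s6 + (-1/2)*s2 + (1/2)*s3 +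
    (-1/2)*s4 + (-1/3)*s6

/-- coefficient of `t ^ 6` in the remainder polynomial. -/
noncomputable def remC6 (d e f R1 R2 R3 R4 W5 W6 s2 s3 s4 s5 s6 z2 z3 z4 z5 z6 : ℝ) : ℝ :=
    (2)*R1*d*s3 + (-3)*R1*d*s4 + (-3)*R1*d^2*s4 + (-1)*R1*s2 + (1)*R1*s3 + (-1)*R1*s4 + (6)*R2*d*s5 +
    (6)*R2*d^2*s5 + (2)*R2*s5 + (-10)*R3*d*s6 + (-10)*R3*d^2*s6 + (-10/3)*R3*s6 + (3)*d*s5 +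
    (7)*d^2*s5 + (8)*d^3*s5 + (4)*d^4*s5 + (1/2)*s5

/-- coefficient of `t ^ 7` in the remainder polynomial. -/
noncomputable def remC7 (d e f R1 R2 R3 R4 W5 W6 s2 s3 s4 s5 s6 z2 z3 z4 z5 z6 : ℝ) : ℝ :=
    (4)*R1*d*s5 + (6)*R1*d^2*s5 + (4)*R1*d^3*s5 + (1)*R1*s5 + (-10)*R2*d*s6 + (-15)*R2*d^2*s6 +
    (-10)*R2*d^3*s6 + (-5/2)*R2*s6 + (-1/6)*W6 + (-7/2)*d*s6 + (-10)*d^2*s6 + (-15)*d^3*s6 +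
    (-25/2)*d^4*s6 + (-5)*d^5*s6 + (-1/2)*s6

/-- coefficient of `t ^ 8` in the remainder polynomial. -/
noncomputable def remC8 (d e f R1 R2 R3 R4 W5 W6 s2 s3 s4 s5 s6 z2 z3 z4 z5 z6 : ℝ) : ℝ :=
    (-5)*R1*d*s6 + (-10)*R1*d^2*s6 + (-10)*R1*d^3*s6 + (-5)*R1*d^4*s6 + (-1)*R1*s6

/-- the remainder polynomial. -/
noncomputable def remPoly (t d e f R1 R2 R3 R4 W5 W6 s2 s3 s4 s5 s6 z2 z3 z4 z5 z6 : ℝ) : ℝ :=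
    t ^ 0 * remC0 d e f R1 R2 R3 R4 W5 W6 s2 s3 s4 s5 s6 z2 z3 z4 z5 z6 +
    t ^ 1 * remC1 d e f R1 R2 R3 R4 W5 W6 s2 s3 s4 s5 s6 z2 z3 z4 z5 z6 +
    t ^ 2 * remC2 d e f R1 R2 R3 R4 W5 W6 s2 s3 s4 s5 s6 z2 z3 z4 z5 z6 +
    t ^ 3 * remC3 d e f R1 R2 R3 R4 W5 W6 s2 s3 s4 s5 s6 z2 z3 z4 z5 z6 +
    t ^ 4 * remC4 d e f R1 R2 R3 R4 W5 W6 s2 s3 s4 s5 s6 z2 z3 z4 z5 z6 +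
    t ^ 5 * remC5 d e f R1 R2 R3 R4 W5 W6 s2 s3 s4 s5 s6 z2 z3 z4 z5 z6 +
    t ^ 6 * remC6 d e f R1 R2 R3 R4 W5 W6 s2 s3 s4 s5 s6 z2 z3 z4 z5 z6 +
    t ^ 7 * remC7 d e f R1 R2 R3 R4 W5 W6 s2 s3 s4 s5 s6 z2 z3 z4 z5 z6 +
    t ^ 8 * remC8 d e f R1 R2 R3 R4 W5 W6 s2 s3 s4 s5 s6 z2 z3 z4 z5 z6

set_option maxHeartbeats 4000000 in
lemma key_expansion (t d e f R1 R2 R3 R4 W1 W2 W3 W4 W5 W6 m1 m2 m3 m4 m5 s2 s3 s4 s5 s6 z2 z3 z4 z5 z6 S2 S3 S4 S5 S6 : ℝ)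
    (hW1 : W1 = -(d+1/2)*(1+t-t^3) + t^4*R1)
    (hW2 : W2 = (d+1/2) - t*(d^2+d+1/3) + t^3*R2)
    (hW3 : W3 = -(d+1/2)/2 + 3/2*t*(d^2+d+1/3) + t^2*R3)
    (hW4 : W4 = t*R4)
    (hm1 : m1 = 1 / 2 * ((d + 1) ^ 2 - d ^ 2) + t ^ 2 * (1 / 1 * ((d + 1) ^ 1 - d ^ 1) * W1))
    (hm2 : m2 = 1 / 3 * ((d + 1) ^ 3 - d ^ 3) + t ^ 2 * (1 / 1 * ((d + 1) ^ 2 - d ^ 2) * W1 + 1 / 1 * ((d + 1) ^ 1 - d ^ 1) * W2))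
    (hm3 : m3 = 1 / 4 * ((d + 1) ^ 4 - d ^ 4) + t ^ 2 * (1 / 1 * ((d + 1) ^ 3 - d ^ 3) * W1 + 3 / 2 * ((d + 1) ^ 2 - d ^ 2) * W2 + 1 / 1 * ((d + 1) ^ 1 - d ^ 1) * W3))
    (hm4 : m4 = 1 / 5 * ((d + 1) ^ 5 - d ^ 5) + t ^ 2 * (1 / 1 * ((d + 1) ^ 4 - d ^ 4) * W1 + 2 / 1 * ((d + 1) ^ 3 - d ^ 3) * W2 + 2 / 1 * ((d + 1) ^ 2 - d ^ 2) * W3 + 1 / 1 * ((d + 1) ^ 1 - d ^ 1) * W4))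
    (hm5 : m5 = 1 / 6 * ((d + 1) ^ 6 - d ^ 6) + t ^ 2 * (1 / 1 * ((d + 1) ^ 5 - d ^ 5) * W1 + 5 / 2 * ((d + 1) ^ 4 - d ^ 4) * W2 + 10 / 3 * ((d + 1) ^ 3 - d ^ 3) * W3 + 5 / 2 * ((d + 1) ^ 2 - d ^ 2) * W4 + 1 / 1 * ((d + 1) ^ 1 - d ^ 1) * W5))
    (hS2 : S2 = z2 - (1 / 2 * t^2 + t + 1/6 * t^3 + t^5*s2))
    (hS3 : S3 = z3 - (1/2*t^2+1/2*t^3+t^4*s3))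
    (hS4 : S4 = z4 - (t^3*s4))
    (hS5 : S5 = z5 - (t^3*s5))
    (hS6 : S6 = z6 - (t^3*s6)) :
    (-1) ^ 0 / 1 * t ^ 1 * (t ^ 1 - 1 - f ^ 1 + e ^ 1) * (t * W1) +
    (-1) ^ 1 / 2 * t ^ 2 * (t ^ 2 - 1 - f ^ 2 + e ^ 2) * (t * W2) +
    (-1) ^ 2 / 3 * t ^ 3 * (t ^ 3 - 1 - f ^ 3 + e ^ 3) * (t * W3) +
    (-1) ^ 3 / 4 * t ^ 4 * (t ^ 4 - 1 - f ^ 4 + e ^ 4) * (t * W4) +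
    (-1) ^ 4 / 5 * t ^ 5 * (t ^ 5 - 1 - f ^ 5 + e ^ 5) * (t * W5) +
    (-1) ^ 5 / 6 * t ^ 6 * (t ^ 6 - 1 - f ^ 6 +
    e ^ 6) * (t * W6) - ((-1) ^ 1 * t ^ 1 * (S2 - e ^ 2) * m1 +
    (-1) ^ 2 * t ^ 2 * (S3 - e ^ 3) * m2 + (-1) ^ 3 * t ^ 3 * (S4 - e ^ 4) * m3 +
    (-1) ^ 4 * t ^ 4 * (S5 - e ^ 5) * m4 + (-1) ^ 5 * t ^ 5 * (S6 - e ^ 6) * m5)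
    = ((-1)*d*e^2 + (1)*d*z2 + (-1/2)*e^2 + (1/2)*z2) * t ^ 1 + ((-1)*d*e + (1)*d*e^3 + (1)*d*f + (-1)*d*z3 + (1)*d^2*e^3 + (-1)*d^2*z3 + (-1/2)*e + (1/3)*e^3 +
    (1/2)*f + (-1/3)*z3) * t ^ 2 + ((-1)*d*e + (1/2)*d*e^2 + (-1)*d*e^4 + (1)*d*f + (1/2)*d*f^2 + (-1)*d*z2 + (1)*d*z4 +
    (-3/2)*d^2*e^4 + (3/2)*d^2*z4 + (-1)*d^3*e^4 + (1)*d^3*z4 + (-1/2)*e + (1/4)*e^2 + (-1/4)*e^4 +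
    (1/2)*f + (1/4)*f^2 + (-1/2)*z2 + (1/4)*z4) * t ^ 3 + ((3/2)*d*e^2 + (-7/6)*d*e^3 + (1)*d*e^5 + (-1/2)*d*f^2 + (1/6)*d*f^3 + (-1)*d*z2 + (1)*d*z3 +
    (-1)*d*z5 + (1/2)*d^2*e^2 + (-2)*d^2*e^3 + (2)*d^2*e^5 + (-1/2)*d^2*f^2 + (2)*d^2*z3 +
    (-2)*d^2*z5 + (2)*d^3*e^5 + (-2)*d^3*z5 + (1)*d^4*e^5 + (-1)*d^4*z5 + (2/3)*e^2 + (-1/12)*e^3 +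
    (1/5)*e^5 + (-1/6)*f^2 + (1/12)*f^3 + (-1/2)*z2 + (-1/5)*z5) * t ^ 4 + ((1)*d*e + (-5/2)*d*e^3 + (-1)*d*e^6 + (-1)*d*f + (-1/2)*d*f^3 + (3)*d*z3 + (1)*d*z6 +
    (-5/2)*d^2*e^3 + (3/2)*d^2*e^4 + (-5/2)*d^2*e^6 + (-1/2)*d^2*f^3 + (3)*d^2*z3 + (-3/2)*d^2*z4 +
    (5/2)*d^2*z6 + (3)*d^3*e^4 + (-10/3)*d^3*e^6 + (-3)*d^3*z4 + (10/3)*d^3*z6 + (-5/2)*d^4*e^6 +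
    (5/2)*d^4*z6 + (-1)*d^5*e^6 + (1)*d^5*z6 + (1/2)*e + (-2/3)*e^3 + (-1/6)*e^6 + (-1/2)*f +
    (-1/6)*f^3 + (5/6)*z3 + (1/6)*z6) * t ^ 5
    + t ^ 6 * remPoly t d e f R1 R2 R3 R4 W5 W6 s2 s3 s4 s5 s6 z2 z3 z4 z5 z6 := by
  subst hS2 hS3 hS4 hS5 hS6 hm1 hm2 hm3 hm4 hm5 hW1 hW2 hW3 hW4
  unfold remPoly remC0 remC1 remC2 remC3 remC4 remC5 remC6 remC7 remC8
  ring

set_option maxHeartbeats 4000000 in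
lemma remPoly_bd (D : ℕ) (d e f z2 z3 z4 z5 z6 : ℝ) (R1 R2 R3 R4 W5 W6 s2 s3 s4 s5 s6 : ℕ → ℝ)
    (h1 : Bd D R1) (h2 : Bd D R2) (h3 : Bd D R3) (h4 : Bd D R4) (h5 : Bd D W5) (h6 : Bd D W6)
    (k2 : Bd D s2) (k3 : Bd D s3) (k4 : Bd D s4) (k5 : Bd D s5) (k6 : Bd D s6) :
    Bd D (fun b => remPoly (1 / (b : ℝ)) d e f (R1 b) (R2 b) (R3 b) (R4 b) (W5 b) (W6 b)
      (s2 b) (s3 b) (s4 b) (s5 b) (s6 b) z2 z3 z4 z5 z6) := by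
  have ht := Bd.inv D
  unfold remPoly remC0 remC1 remC2 remC3 remC4 remC5 remC6 remC7 remC8
  repeat' first | exact Bd.const D _ | exact Bd.inv D | assumption | apply Bd.sub | apply Bd.add | apply Bd.mul | apply Bd.neg | apply Bd.pow

theorem kempner_d_asymptotic (d : ℕ) (hd : 1 ≤ d) (a1 a2 a3 a4 a5 : ℝ)
    (h1 : a1 = ((d : ℝ) + 1 / 2) * (zetaR 2 - ((d : ℝ) ^ 2)⁻¹))
    (h2 : a2 = -((d : ℝ) ^ 2 + d + 1 / 3) * zetaR 3
      + (9 * (d : ℝ) ^ 2 + 8 * d + 2) / (6 * (d : ℝ) ^ 3 * (d + 1)))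
    (h3 : a3 = ((d : ℝ) + 1 / 2) * ((d : ℝ) ^ 2 + d + 1 / 2) * zetaR 4
      - ((d : ℝ) + 1 / 2) * zetaR 2
      - ((d : ℝ) + 1 / 2) * (2 * (d : ℝ) ^ 4 + 6 * (d : ℝ) ^ 3 + 6 * (d : ℝ) ^ 2 + 4 * d + 1)
        / (2 * (d : ℝ) ^ 4 * ((d : ℝ) + 1) ^ 2))
    (h4 : a4 = -((d : ℝ) ^ 4 + 2 * (d : ℝ) ^ 3 + 2 * (d : ℝ) ^ 2 + d + 1 / 5) * zetaR 5
      + (2 * (d : ℝ) + 1) * d * zetaR 3 - ((d : ℝ) + 1 / 2) * zetaR 2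
      + (60 * (d : ℝ) ^ 7 + 240 * (d : ℝ) ^ 6 + 500 * (d : ℝ) ^ 5 + 705 * (d : ℝ) ^ 4
          + 627 * (d : ℝ) ^ 3 + 331 * (d : ℝ) ^ 2 + 96 * d + 12)
        / (60 * (d : ℝ) ^ 5 * ((d : ℝ) + 1) ^ 3))
    (h5 : a5 = ((d : ℝ) + 1 / 2) * ((d : ℝ) ^ 2 + d + 1) * ((d : ℝ) ^ 2 + d + 1 / 3) * zetaR 6
      - 3 * ((d : ℝ) + 1 / 2) * (d : ℝ) ^ 2 * zetaR 4
      + (3 * (d : ℝ) ^ 2 + 3 * d + 5 / 6) * zetaR 3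
      - ((d : ℝ) + 1 / 2) * (9 * (d : ℝ) ^ 6 + 38 * (d : ℝ) ^ 5 + 56 * (d : ℝ) ^ 4
          + 44 * (d : ℝ) ^ 3 + 22 * (d : ℝ) ^ 2 + 7 * d + 1)
        / (3 * (d : ℝ) ^ 6 * ((d : ℝ) + 1) ^ 3)) :
    (fun b : ℕ => irwinSum b d 0 -
      ((b : ℝ) * Real.log b - (b : ℝ) * Real.log (1 + 1 / (d : ℝ))
        + a1 / b + a2 / (b : ℝ) ^ 2 + a3 / (b : ℝ) ^ 3 + a4 / (b : ℝ) ^ 4 + a5 / (b : ℝ) ^ 5))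
      =O[atTop] fun b : ℕ => ((b : ℝ) ^ 6)⁻¹ := by
  have hd0 : (d : ℝ) ≠ 0 := by
    have : 0 < d := hd
    positivity
  have hd1 : (d : ℝ) + 1 ≠ 0 := by positivity
  obtain ⟨R1, hR1, eR1⟩ := W_exp_1 d hd
  obtain ⟨R2, hR2, eR2⟩ := W_exp_2 d hd
  obtain ⟨R3, hR3, eR3⟩ := W_exp_3 d hd
  obtain ⟨R4, hR4, eR4⟩ := W_exp_4 d hd
  have hW5 := W_bd d 4 hd (by norm_num)
  have hW6 := W_bd d 5 hd (by norm_num)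
  have hs2 := Bd.scaled d 5 1 _ (fun b hb => (tail2 b hb).trans_eq (one_mul _).symm)
  have hs3 := Bd.scaled d 4 1 _ (fun b hb => (tail3 b hb).trans_eq (one_mul _).symm)
  have hs4 := Bd.scaled d 3 8 _ (fun b hb => tail_cubic 4 (by norm_num) b hb)
  have hs5 := Bd.scaled d 3 8 _ (fun b hb => tail_cubic 5 (by norm_num) b hb)
  have hs6 := Bd.scaled d 3 8 _ (fun b hb => tail_cubic 6 (by norm_num) b hb)
  obtain ⟨C, hC⟩ := remPoly_bd d d (1 / (d : ℝ)) (1 / ((d : ℝ) + 1)) (zetaR 2) (zetaR 3) (zetaR 4)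
    (zetaR 5) (zetaR 6) R1 R2 R3 R4 _ _ _ _ _ _ _ hR1 hR2 hR3 hR4 hW5 hW6 hs2 hs3 hs4 hs5 hs6
  obtain ⟨K, hK⟩ := irwin_main d hd
  have ha1 : a1 = (-1)*(d : ℝ)*(1 / (d : ℝ))^2 + (1)*(d : ℝ)*zetaR 2 + (-1/2)*(1 / (d : ℝ))^2 + (1/2)*zetaR 2 := by
    rw [h1]
    field_simp
    ring
  have ha2 : a2 = (-1)*(d : ℝ)*(1 / (d : ℝ)) + (1)*(d : ℝ)*(1 / (d : ℝ))^3 + (1)*(d : ℝ)*(1 / ((d : ℝ) + 1)) +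
    (-1)*(d : ℝ)*zetaR 3 + (1)*(d : ℝ)^2*(1 / (d : ℝ))^3 + (-1)*(d : ℝ)^2*zetaR 3 +
    (-1/2)*(1 / (d : ℝ)) + (1/3)*(1 / (d : ℝ))^3 + (1/2)*(1 / ((d : ℝ) + 1)) + (-1/3)*zetaR 3 := by
    rw [h2]
    field_simp
    ring
  have ha3 : a3 = (-1)*(d : ℝ)*(1 / (d : ℝ)) + (1/2)*(d : ℝ)*(1 / (d : ℝ))^2 + (-1)*(d : ℝ)*(1 / (d : ℝ))^4 +
    (1)*(d : ℝ)*(1 / ((d : ℝ) + 1)) + (1/2)*(d : ℝ)*(1 / ((d : ℝ) + 1))^2 + (-1)*(d : ℝ)*zetaR 2 +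
    (1)*(d : ℝ)*zetaR 4 + (-3/2)*(d : ℝ)^2*(1 / (d : ℝ))^4 + (3/2)*(d : ℝ)^2*zetaR 4 +
    (-1)*(d : ℝ)^3*(1 / (d : ℝ))^4 + (1)*(d : ℝ)^3*zetaR 4 + (-1/2)*(1 / (d : ℝ)) +
    (1/4)*(1 / (d : ℝ))^2 + (-1/4)*(1 / (d : ℝ))^4 + (1/2)*(1 / ((d : ℝ) + 1)) +
    (1/4)*(1 / ((d : ℝ) + 1))^2 + (-1/2)*zetaR 2 + (1/4)*zetaR 4 := by
    rw [h3]
    field_simp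
    ring
  have ha4 : a4 = (3/2)*(d : ℝ)*(1 / (d : ℝ))^2 + (-7/6)*(d : ℝ)*(1 / (d : ℝ))^3 + (1)*(d : ℝ)*(1 / (d : ℝ))^5 +
    (-1/2)*(d : ℝ)*(1 / ((d : ℝ) + 1))^2 + (1/6)*(d : ℝ)*(1 / ((d : ℝ) + 1))^3 +
    (-1)*(d : ℝ)*zetaR 2 + (1)*(d : ℝ)*zetaR 3 + (-1)*(d : ℝ)*zetaR 5 +
    (1/2)*(d : ℝ)^2*(1 / (d : ℝ))^2 + (-2)*(d : ℝ)^2*(1 / (d : ℝ))^3 +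
    (2)*(d : ℝ)^2*(1 / (d : ℝ))^5 + (-1/2)*(d : ℝ)^2*(1 / ((d : ℝ) + 1))^2 + (2)*(d : ℝ)^2*zetaR 3 +
    (-2)*(d : ℝ)^2*zetaR 5 + (2)*(d : ℝ)^3*(1 / (d : ℝ))^5 + (-2)*(d : ℝ)^3*zetaR 5 +
    (1)*(d : ℝ)^4*(1 / (d : ℝ))^5 + (-1)*(d : ℝ)^4*zetaR 5 + (2/3)*(1 / (d : ℝ))^2 +
    (-1/12)*(1 / (d : ℝ))^3 + (1/5)*(1 / (d : ℝ))^5 + (-1/6)*(1 / ((d : ℝ) + 1))^2 +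
    (1/12)*(1 / ((d : ℝ) + 1))^3 + (-1/2)*zetaR 2 + (-1/5)*zetaR 5 := by
    rw [h4]
    field_simp
    ring
  have ha5 : a5 = (1)*(d : ℝ)*(1 / (d : ℝ)) + (-5/2)*(d : ℝ)*(1 / (d : ℝ))^3 + (-1)*(d : ℝ)*(1 / (d : ℝ))^6 +
    (-1)*(d : ℝ)*(1 / ((d : ℝ) + 1)) + (-1/2)*(d : ℝ)*(1 / ((d : ℝ) + 1))^3 + (3)*(d : ℝ)*zetaR 3 +
    (1)*(d : ℝ)*zetaR 6 + (-5/2)*(d : ℝ)^2*(1 / (d : ℝ))^3 + (3/2)*(d : ℝ)^2*(1 / (d : ℝ))^4 +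
    (-5/2)*(d : ℝ)^2*(1 / (d : ℝ))^6 + (-1/2)*(d : ℝ)^2*(1 / ((d : ℝ) + 1))^3 +
    (3)*(d : ℝ)^2*zetaR 3 + (-3/2)*(d : ℝ)^2*zetaR 4 + (5/2)*(d : ℝ)^2*zetaR 6 +
    (3)*(d : ℝ)^3*(1 / (d : ℝ))^4 + (-10/3)*(d : ℝ)^3*(1 / (d : ℝ))^6 + (-3)*(d : ℝ)^3*zetaR 4 +
    (10/3)*(d : ℝ)^3*zetaR 6 + (-5/2)*(d : ℝ)^4*(1 / (d : ℝ))^6 + (5/2)*(d : ℝ)^4*zetaR 6 +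
    (-1)*(d : ℝ)^5*(1 / (d : ℝ))^6 + (1)*(d : ℝ)^5*zetaR 6 + (1/2)*(1 / (d : ℝ)) +
    (-2/3)*(1 / (d : ℝ))^3 + (-1/6)*(1 / (d : ℝ))^6 + (-1/2)*(1 / ((d : ℝ) + 1)) +
    (-1/6)*(1 / ((d : ℝ) + 1))^3 + (5/6)*zetaR 3 + (1/6)*zetaR 6 := by
    rw [h5]
    field_simp
    ring
  rw [isBigO_iff]
  refine ⟨C + K, ?_⟩
  filter_upwards [eventually_ge_atTop 2, eventually_gt_atTop d] with b hb hdb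
  have hb0 : (b : ℝ) ≠ 0 := by positivity
  have hbp : (0 : ℝ) < b := by positivity
  have hc := hC b hb hdb
  beta_reduce at hc
  have hk := hK b hb hdb
  have key := key_expansion (1 / (b : ℝ)) d (1 / (d : ℝ)) (1 / ((d : ℝ) + 1))
    (R1 b) (R2 b) (R3 b) (R4 b) (Wf d 0 b) (Wf d 1 b) (Wf d 2 b) (Wf d 3 b) (Wf d 4 b) (Wf d 5 b)
    (mf d 1 b) (mf d 2 b) (mf d 3 b) (mf d 4 b) (mf d 5 b)
    _ _ _ _ _ (zetaR 2) (zetaR 3) (zetaR 4) (zetaR 5) (zetaR 6)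
    (Sz 2 b) (Sz 3 b) (Sz 4 b) (Sz 5 b) (Sz 6 b)
    (eR1 b hb hdb) (eR2 b hb hdb) (eR3 b hb hdb) (eR4 b hb hdb)
    (mf_eq_1 b d hb hd hdb) (mf_eq_2 b d hb hd hdb) (mf_eq_3 b d hb hd hdb)
    (mf_eq_4 b d hb hd hdb) (mf_eq_5 b d hb hd hdb)
    (S2_form b hbp) (S3_form b hbp) (S_form 4 b hbp) (S_form 5 b hbp) (S_form 6 b hbp)
  rw [← ha1, ← ha2, ← ha3, ← ha4, ← ha5] at key
  generalize remPoly _ _ _ _ _ _ _ _ _ _ _ _ _ _ _ _ _ _ _ _ = r at key hc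
  have hsum : ∑ j ∈ Finset.range 6, alphaC b d j * beta b d j
      - ∑ j ∈ Finset.range 5, gammaC b d (j + 1) * Mom b d (j + 1)
      = a1 * (1 / (b : ℝ)) ^ 1 + a2 * (1 / (b : ℝ)) ^ 2 + a3 * (1 / (b : ℝ)) ^ 3
        + a4 * (1 / (b : ℝ)) ^ 4 + a5 * (1 / (b : ℝ)) ^ 5 + (1 / (b : ℝ)) ^ 6 * r := by
    rw [← key]
    have hbt : (b : ℝ)⁻¹ * b = 1 := inv_mul_cancel₀ hb0
    have hw : ∀ k, 1 / (b : ℝ) * Wf d k b = beta b d k := fun k => by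
      unfold Wf
      field_simp
    simp only [hw]
    simp only [Finset.sum_range_succ, Finset.sum_range_zero, alphaC, gammaC, mf]
    push_cast
    ring
  rw [Real.norm_eq_abs, Real.norm_eq_abs, abs_of_pos (by positivity : (0 : ℝ) < ((b : ℝ) ^ 6)⁻¹)]
  have hrw : irwinSum b d 0 -
      ((b : ℝ) * Real.log b - (b : ℝ) * Real.log (1 + 1 / (d : ℝ))
        + a1 / b + a2 / (b : ℝ) ^ 2 + a3 / (b : ℝ) ^ 3 + a4 / (b : ℝ) ^ 4 + a5 / (b : ℝ) ^ 5)
      = (1 / (b : ℝ)) ^ 6 * r + (irwinSum b d 0 - ((b:ℝ)*(Real.log b - Real.log (1+1/(d:ℝ)))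
        + ∑ j ∈ Finset.range 6, alphaC b d j * beta b d j
        - ∑ j ∈ Finset.range 5, gammaC b d (j + 1) * Mom b d (j + 1))) := by
    rw [add_sub_assoc _ (∑ j ∈ Finset.range 6, alphaC b d j * beta b d j), hsum]
    ring
  rw [hrw]
  refine (abs_add_le _ _).trans ?_
  have h6 : ((b : ℝ) ^ 6)⁻¹ = (1 / (b : ℝ)) ^ 6 := by simp
  rw [h6, abs_mul, abs_of_nonneg (by positivity : (0 : ℝ) ≤ (1 / (b : ℝ)) ^ 6)]
  have := mul_le_mul_of_nonneg_left hc (by positivity : (0 : ℝ) ≤ (1 / (b : ℝ)) ^ 6)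
  exact (add_le_add this hk).trans_eq (by ring)
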